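/- arXiv:1510.05960 — 13 statements merged into one kernel-verified Lean document; each statement's English description precedes it below -/
import Mathlib

section
/- Let g(x) := sin(x) − x·cos(x). Then for every real N ≥ 3, every x ∈ (0, π) and every t ∈ [0, 1], one has g(t·x) ≥ t^N · g(x). -/
theorem aux_g_nonneg (x : ℝ) (hx : x ∈ Set.Icc 0 Real.pi) :
    0 ≤ Real.sin x - x * Real.cos x := by
  have hd : ∀ y : ℝ, HasDerivAt (fun y => Real.sin y - y * Real.cos y) (y * Real.sin y) y := by
    intro y
    refine HasDerivAt.congr_deriv ((Real.hasDerivAt_sin y).sub ((hasDerivAt_id y).mul (Real.hasDerivAt_cos y))) ?_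
    simp
  have hm : MonotoneOn (fun y => Real.sin y - y * Real.cos y) (Set.Icc 0 Real.pi) := by
    apply monotoneOn_of_deriv_nonneg (convex_Icc _ _)
    · exact fun y _ => (hd y).continuousAt.continuousWithinAt
    · exact fun y _ => (hd y).differentiableAt.differentiableWithinAt
    · intro y hy
      rw [interior_Icc] at hy
      rw [(hd y).deriv]
      exact mul_nonneg hy.1.le (Real.sin_pos_of_mem_Ioo hy).le
  have := hm (Set.left_mem_Icc.2 Real.pi_pos.le) hx hx.1
  simpa using this

theorem aux_k_nonpos (x : ℝ) (hx : x ∈ Set.Icc 0 Real.pi) :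
    x ^ 2 * Real.sin x - 3 * (Real.sin x - x * Real.cos x) ≤ 0 := by
  have hd : ∀ y : ℝ, HasDerivAt
      (fun y => y ^ 2 * Real.sin y - 3 * (Real.sin y - y * Real.cos y))
      (-(y * (Real.sin y - y * Real.cos y))) y := by
    intro y
    refine HasDerivAt.congr_deriv (((hasDerivAt_pow 2 y).mul (Real.hasDerivAt_sin y)).sub
      (((Real.hasDerivAt_sin y).sub
        ((hasDerivAt_id y).mul (Real.hasDerivAt_cos y))).const_mul 3)) ?_
    simp
    ring
  have hm : AntitoneOn (fun y => y ^ 2 * Real.sin y - 3 * (Real.sin y - y * Real.cos y))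
      (Set.Icc 0 Real.pi) := by
    apply antitoneOn_of_deriv_nonpos (convex_Icc _ _)
    · exact fun y _ => (hd y).continuousAt.continuousWithinAt
    · exact fun y _ => (hd y).differentiableAt.differentiableWithinAt
    · intro y hy
      have hy' := interior_subset hy
      rw [(hd y).deriv]
      exact neg_nonpos.2 (mul_nonneg hy'.1 (aux_g_nonneg y hy'))
  have := hm (Set.left_mem_Icc.2 Real.pi_pos.le) hx hx.1
  simpa using this

theorem aux_q_anti : AntitoneOn (fun y : ℝ => (Real.sin y - y * Real.cos y) / y ^ 3)
    (Set.Ioc 0 Real.pi) := by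
  have hd : ∀ y : ℝ, 0 < y → HasDerivAt (fun y : ℝ => (Real.sin y - y * Real.cos y) / y ^ 3)
      ((y ^ 2 * Real.sin y - 3 * (Real.sin y - y * Real.cos y)) / y ^ 4) y := by
    intro y hy
    refine HasDerivAt.congr_deriv (((Real.hasDerivAt_sin y).sub ((hasDerivAt_id y).mul (Real.hasDerivAt_cos y))).div
      (hasDerivAt_pow 3 y) (by positivity)) ?_
    simp
    field_simp
  apply antitoneOn_of_deriv_nonpos (convex_Ioc _ _)
  · exact fun y hy => (hd y hy.1).continuousAt.continuousWithinAt
  · exact fun y hy => (hd y (interior_subset hy).1).differentiableAt.differentiableWithinAt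
  · intro y hy
    have hy' := interior_subset hy
    rw [(hd y hy'.1).deriv]
    exact div_nonpos_of_nonpos_of_nonneg (aux_k_nonpos y ⟨hy'.1.le, hy'.2⟩) (by positivity)

/-- Lemma 3.6 of the paper: with `g x = sin x - x * cos x`, for every `N ≥ 3`,
`x ∈ (0, π)` and `t ∈ [0, 1]`, one has `g (t * x) ≥ t ^ N * g x`. -/
theorem g_homogeneity_ineq (N : ℝ) (hN : 3 ≤ N) (x : ℝ) (hx : x ∈ Set.Ioo 0 Real.pi)
    (t : ℝ) (ht : t ∈ Set.Icc (0 : ℝ) 1) :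
    Real.sin (t * x) - t * x * Real.cos (t * x) ≥
      t ^ N * (Real.sin x - x * Real.cos x) := by
  obtain ⟨hx0, hx1⟩ := hx
  obtain ⟨ht0, ht1⟩ := ht
  have hg := aux_g_nonneg x ⟨hx0.le, hx1.le⟩
  rcases ht0.eq_or_lt with h | h
  · subst h
    rw [Real.zero_rpow (by linarith)]
    simp
  have hle : t * x ≤ x := by nlinarith
  have hpos : 0 < t * x := by positivity
  have h1 := aux_q_anti ⟨hpos, by linarith⟩ ⟨hx0, hx1.le⟩ hle
  have h2 : t ^ N ≤ t ^ 3 := by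
    have := Real.rpow_le_rpow_of_exponent_ge h ht1 hN
    exact_mod_cast this
  have h3 : t ^ 3 * (Real.sin x - x * Real.cos x) ≤
      Real.sin (t * x) - t * x * Real.cos (t * x) := by
    simp only at h1
    rw [le_div_iff₀ (by positivity)] at h1
    calc _ = (Real.sin x - x * Real.cos x) / x ^ 3 * (t * x) ^ 3 := by field_simp
      _ ≤ _ := h1
  exact (mul_le_mul_of_nonneg_right h2 hg).trans h3
end

section
/- For every s ∈ [0, π], one has (3 − s²)·sin(s) − 3·s·cos(s) ≥ 0. Equivalently, the function g(s) = sin(s) − s·cos(s) satisfies the differential inequality g'(s) ≤ 3·g(s)/s for all s ∈ (0, π). -/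
lemma aux_mono (f f' : ℝ → ℝ) (hf : ∀ x, HasDerivAt f (f' x) x)
    (h0 : ∀ x ∈ Set.Icc 0 Real.pi, 0 ≤ f' x) (hz : f 0 = 0) (s : ℝ)
    (hs : s ∈ Set.Icc 0 Real.pi) : 0 ≤ f s := by
  have hm : MonotoneOn f (Set.Icc 0 Real.pi) := by
    apply monotoneOn_of_deriv_nonneg (convex_Icc _ _)
    · exact fun x _ => (hf x).continuousAt.continuousWithinAt
    · exact fun x _ => (hf x).differentiableAt.differentiableWithinAt
    · intro x hx
      rw [(hf x).deriv]
      exact h0 x (interior_subset hx)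
  have := hm ⟨le_refl _, Real.pi_pos.le⟩ hs hs.1
  rwa [hz] at this

lemma aux_g (s : ℝ) (hs : s ∈ Set.Icc 0 Real.pi) : 0 ≤ Real.sin s - s * Real.cos s := by
  refine aux_mono (fun s => Real.sin s - s * Real.cos s) (fun s => s * Real.sin s) ?_ ?_ (by simp) s hs
  · intro x
    refine HasDerivAt.congr_deriv (f := fun s => Real.sin s - s * Real.cos s) ((Real.hasDerivAt_sin x).sub ((hasDerivAt_id x).mul (Real.hasDerivAt_cos x))) ?_
    simp
  · intro x hx
    exact mul_nonneg hx.1 (Real.sin_nonneg_of_mem_Icc hx)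

/-- The key differential inequality in the proof of Lemma 3.6:
`(3 - s²)·sin s − 3·s·cos s ≥ 0` for all `s ∈ [0, π]`.  Equivalently
`g'(s) ≤ 3 g(s)/s` on `(0, π)` for `g s = sin s - s cos s`. -/
theorem key_differential_ineq (s : ℝ) (hs : s ∈ Set.Icc 0 Real.pi) :
    (3 - s ^ 2) * Real.sin s - 3 * s * Real.cos s ≥ 0 := by
  refine aux_mono (fun s => (3 - s ^ 2) * Real.sin s - 3 * s * Real.cos s)
    (fun s => s * (Real.sin s - s * Real.cos s)) ?_ ?_ (by simp) s hs
  · intro x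
    refine HasDerivAt.congr_deriv (f := fun s => (3 - s ^ 2) * Real.sin s - 3 * s * Real.cos s)
      (((((hasDerivAt_id x).pow 2).const_sub 3).mul (Real.hasDerivAt_sin x)).sub
      (((hasDerivAt_id x).const_mul 3).mul (Real.hasDerivAt_cos x))) ?_
    simp
    ring
  · intro x hx
    exact mul_nonneg hx.1 (aux_g x hx)
end

section
/- Let a = (a_1, …, a_d) with a_i ≥ 0 for all i, let w ∈ ℝ with 0 < |w| < 2π/α_d, and let t ∈ (0, 1]. Then J(t²·a, t·w) ≥ t² · J(a, w). (Since ‖t·pⁱ‖² = t²·‖pⁱ‖², this is the statement that the Jacobian determinant of the corank-1 Carnot exponential map satisfies J(t·p_x, t·p_z) ≥ t²·J(p_x, p_z).) -/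
open Finset

/-- The Jacobian determinant of the exponential map of a corank-1 Carnot group
whose skew-symmetric matrix has nonzero singular values `α 0 ≤ … ≤ α (d-1)`,
as a function of `a i = ‖pⁱ‖²` and `w = p_z`. -/
noncomputable def Jdet (d : ℕ) (α : Fin d → ℝ) (a : Fin d → ℝ) (w : ℝ) : ℝ :=
  2 ^ (2 * d) / ((∏ i, α i) ^ 2 * w ^ (2 * d + 2)) *
    ∑ i, a i * (∏ j ∈ univ.erase i, Real.sin (α j * w / 2) ^ 2) *
      Real.sin (α i * w / 2) *
      (Real.sin (α i * w / 2) - α i * w / 2 * Real.cos (α i * w / 2))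

lemma aux_S {x : ℝ} (h0 : 0 ≤ x) (h1 : x ≤ Real.pi) : 0 ≤ Real.sin x - x * Real.cos x := by
  have hd : ∀ y : ℝ, HasDerivAt (fun y => Real.sin y - y * Real.cos y) (y * Real.sin y) y := by
    intro y
    have := (Real.hasDerivAt_sin y).sub ((hasDerivAt_id y).mul (Real.hasDerivAt_cos y))
    refine HasDerivAt.congr_deriv (f := _) this ?_
    simp
  have hm : MonotoneOn (fun y => Real.sin y - y * Real.cos y) (Set.Icc 0 Real.pi) := by
    apply monotoneOn_of_deriv_nonneg (convex_Icc _ _)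
    · exact fun y _ => (hd y).continuousAt.continuousWithinAt
    · exact fun y _ => (hd y).differentiableAt.differentiableWithinAt
    · intro y hy
      rw [interior_Icc] at hy
      rw [(hd y).deriv]
      exact mul_nonneg hy.1.le (Real.sin_nonneg_of_nonneg_of_le_pi hy.1.le hy.2.le)
  have := hm ⟨le_rfl, Real.pi_pos.le⟩ ⟨h0, h1⟩ h0
  simpa using this

lemma aux_h {x : ℝ} (h0 : 0 ≤ x) (h1 : x ≤ Real.pi) :
    x ^ 2 * Real.sin x - 3 * (Real.sin x - x * Real.cos x) ≤ 0 := by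
  have hd : ∀ y : ℝ, HasDerivAt
      (fun y => y ^ 2 * Real.sin y - 3 * (Real.sin y - y * Real.cos y))
      (- (y * (Real.sin y - y * Real.cos y))) y := by
    intro y
    have := ((hasDerivAt_pow 2 y).mul (Real.hasDerivAt_sin y)).sub
      (((Real.hasDerivAt_sin y).sub ((hasDerivAt_id y).mul (Real.hasDerivAt_cos y))).const_mul 3)
    refine HasDerivAt.congr_deriv (f := _) this ?_
    simp
    ring
  have hm : AntitoneOn (fun y => y ^ 2 * Real.sin y - 3 * (Real.sin y - y * Real.cos y))
      (Set.Icc 0 Real.pi) := by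
    apply antitoneOn_of_deriv_nonpos (convex_Icc _ _)
    · exact fun y _ => (hd y).continuousAt.continuousWithinAt
    · exact fun y _ => (hd y).differentiableAt.differentiableWithinAt
    · intro y hy
      rw [interior_Icc] at hy
      rw [(hd y).deriv]
      have := mul_nonneg hy.1.le (aux_S hy.1.le hy.2.le)
      linarith
  have := hm ⟨le_rfl, Real.pi_pos.le⟩ ⟨h0, h1⟩ h0
  simpa using this

lemma aux_B {x t : ℝ} (h0 : 0 < x) (h1 : x < Real.pi) (t0 : 0 < t) (t1 : t ≤ 1) :
    t ^ 3 * (Real.sin x - x * Real.cos x) ≤ Real.sin (t * x) - t * x * Real.cos (t * x) := by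
  have hd : ∀ y : ℝ, 0 < y → HasDerivAt
      (fun y => (Real.sin y - y * Real.cos y) / y ^ 3)
      ((y ^ 2 * Real.sin y - 3 * (Real.sin y - y * Real.cos y)) / y ^ 4) y := by
    intro y hy
    have := ((Real.hasDerivAt_sin y).sub ((hasDerivAt_id y).mul (Real.hasDerivAt_cos y))).div
      (hasDerivAt_pow 3 y) (by positivity)
    refine HasDerivAt.congr_deriv (f := _) this ?_
    simp
    field_simp
  have hm : AntitoneOn (fun y => (Real.sin y - y * Real.cos y) / y ^ 3)
      (Set.Ioo 0 Real.pi) := by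
    apply antitoneOn_of_deriv_nonpos (convex_Ioo _ _)
    · exact fun y hy => (hd y hy.1).continuousAt.continuousWithinAt
    · intro y hy
      rw [interior_Ioo] at hy
      exact (hd y hy.1).differentiableAt.differentiableWithinAt
    · intro y hy
      rw [interior_Ioo] at hy
      rw [(hd y hy.1).deriv]
      exact div_nonpos_of_nonpos_of_nonneg (aux_h hy.1.le hy.2.le) (by positivity)
  have htx : 0 < t * x := mul_pos t0 h0
  have hle : t * x ≤ x := by nlinarith
  have := hm ⟨htx, by linarith⟩ ⟨h0, h1⟩ hle
  simp only at this
  rw [div_le_div_iff₀ (by positivity) (by positivity)] at this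
  have hx3 : 0 < x ^ 3 := by positivity
  refine le_of_mul_le_mul_right ?_ hx3
  calc _ = (Real.sin x - x * Real.cos x) * (t * x) ^ 3 := by ring
    _ ≤ _ := this

lemma aux_A {x t : ℝ} (h0 : 0 ≤ x) (h1 : x ≤ Real.pi) (t0 : 0 < t) (t1 : t ≤ 1) :
    t * Real.sin x ≤ Real.sin (t * x) := by
  have := strictConcaveOn_sin_Icc.concaveOn.2 (show (0:ℝ) ∈ Set.Icc 0 Real.pi from ⟨le_rfl, Real.pi_pos.le⟩)
    (show x ∈ Set.Icc 0 Real.pi from ⟨h0, h1⟩) (sub_nonneg.2 t1) t0.le (by ring)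
  simpa using this

lemma aux_pos {x t : ℝ} (h0 : 0 < x) (h1 : x < Real.pi) (t0 : 0 < t) (t1 : t ≤ 1) :
    t ^ 2 * Real.sin x ^ 2 ≤ Real.sin (t * x) ^ 2 ∧
    0 ≤ Real.sin x * (Real.sin x - x * Real.cos x) ∧
    t ^ 4 * (Real.sin x * (Real.sin x - x * Real.cos x)) ≤
      Real.sin (t * x) * (Real.sin (t * x) - t * x * Real.cos (t * x)) := by
  have hs := Real.sin_nonneg_of_nonneg_of_le_pi h0.le h1.le
  have hS := aux_S h0.le h1.le
  have hA := aux_A h0.le h1.le t0 t1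
  have hB := aux_B h0 h1 t0 t1
  refine ⟨?_, mul_nonneg hs hS, ?_⟩
  · rw [← mul_pow]
    exact pow_le_pow_left₀ (by positivity) hA 2
  · calc _ = (t * Real.sin x) * (t ^ 3 * (Real.sin x - x * Real.cos x)) := by ring
      _ ≤ _ := mul_le_mul hA hB (by positivity) (le_trans (by positivity) hA)

lemma aux_all {x t : ℝ} (h0 : x ≠ 0) (h1 : |x| < Real.pi) (t0 : 0 < t) (t1 : t ≤ 1) :
    t ^ 2 * Real.sin x ^ 2 ≤ Real.sin (t * x) ^ 2 ∧
    0 ≤ Real.sin x * (Real.sin x - x * Real.cos x) ∧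
    t ^ 4 * (Real.sin x * (Real.sin x - x * Real.cos x)) ≤
      Real.sin (t * x) * (Real.sin (t * x) - t * x * Real.cos (t * x)) := by
  rcases lt_or_gt_of_ne h0 with h | h
  · rw [abs_of_neg h] at h1
    have := aux_pos (x := -x) (by linarith) h1 t0 t1
    simp only [mul_neg, Real.sin_neg, Real.cos_neg] at this
    obtain ⟨p, q, r⟩ := this
    refine ⟨by linarith, by linarith, by linarith⟩
  · rw [abs_of_pos h] at h1
    exact aux_pos h h1 t0 t1

/-- Corollary 3.7 of the paper: the Jacobian determinant of the corank-1 Carnot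
exponential map satisfies `J(t·p_x, t·p_z) ≥ t² · J(p_x, p_z)` on the injectivity
domain; in terms of `a i = ‖pⁱ‖²` this reads `J(t²·a, t·w) ≥ t² · J(a, w)`. -/
theorem Jdet_scaling (d : ℕ) (hd : 1 ≤ d) (α : Fin d → ℝ)
    (hα : ∀ i, 0 < α i) (hmono : Monotone α)
    (a : Fin d → ℝ) (ha : ∀ i, 0 ≤ a i)
    (w : ℝ) (hw0 : w ≠ 0)
    (hw : |w| < 2 * Real.pi / α ⟨d - 1, Nat.sub_lt hd one_pos⟩)
    (t : ℝ) (ht : t ∈ Set.Ioc (0 : ℝ) 1) :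
    Jdet d α (fun i => t ^ 2 * a i) (t * w) ≥ t ^ 2 * Jdet d α a w := by
  obtain ⟨t0, t1⟩ := ht
  have key : ∀ i, _ := fun i => aux_all (x := α i * w / 2) (t := t)
    (div_ne_zero (mul_ne_zero (hα i).ne' hw0) two_ne_zero) (by
      have hle : α i ≤ α ⟨d - 1, Nat.sub_lt hd one_pos⟩ := hmono (by
        rw [Fin.le_def]
        have := i.2
        simp only
        omega)
      rw [lt_div_iff₀ (hα _)] at hw
      rw [abs_div, abs_mul, abs_of_pos (hα i), abs_two]
      have := mul_le_mul_of_nonneg_left hle (abs_nonneg w)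
      linarith) t0 t1
  have hx : ∀ i, α i * (t * w) / 2 = t * (α i * w / 2) := fun i => by ring
  unfold Jdet
  simp only [hx]
  generalize hX : (fun i => α i * w / 2) = X
  have hX' : ∀ i, α i * w / 2 = X i := fun i => congrFun hX i
  simp only [hX'] at key ⊢
  have hsum : t ^ (2 * d + 2) * ∑ i, a i * (∏ j ∈ univ.erase i, Real.sin (X j) ^ 2) *
        Real.sin (X i) * (Real.sin (X i) - X i * Real.cos (X i)) ≤
      ∑ i, a i * (∏ j ∈ univ.erase i, Real.sin (t * X j) ^ 2) *
        Real.sin (t * X i) * (Real.sin (t * X i) - t * X i * Real.cos (t * X i)) := by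
    rw [Finset.mul_sum]
    refine Finset.sum_le_sum fun i _ => ?_
    have hp : (t ^ 2) ^ (d - 1) * ∏ j ∈ univ.erase i, Real.sin (X j) ^ 2 ≤
        ∏ j ∈ univ.erase i, Real.sin (t * X j) ^ 2 := by
      have hc : (univ.erase i).card = d - 1 := by simp
      rw [← hc, ← Finset.prod_const, ← Finset.prod_mul_distrib]
      exact Finset.prod_le_prod (fun j _ => by positivity) (fun j _ => (key j).1)
    have ht : t ^ (2 * d + 2) = (t ^ 2) ^ (d - 1) * t ^ 4 := by
      rw [← pow_mul, ← pow_add]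
      congr 1
      omega
    obtain ⟨-, q, r⟩ := key i
    have := mul_le_mul hp r (by positivity) (Finset.prod_nonneg fun j _ => by positivity)
    have := mul_le_mul_of_nonneg_left this (ha i)
    rw [ht]
    calc _ = _ := by ring
      _ ≤ _ := this
      _ = _ := by ring
  have hC : 0 ≤ 2 ^ (2 * d) / ((∏ i, α i) ^ 2 * (t * w) ^ (2 * d + 2)) := by
    have : (t * w) ^ (2 * d + 2) = ((t * w) ^ (d + 1)) ^ 2 := by
      rw [← pow_mul]
      congr 1
      omega
    rw [this]
    positivity
  have h := mul_le_mul_of_nonneg_left (mul_le_mul_of_nonneg_left hsum hC) (sq_nonneg t)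
  have hP : (∏ i, α i) ≠ 0 := Finset.prod_ne_zero_iff.2 fun i _ => (hα i).ne'
  refine ge_iff_le.2 ?_
  have e1 : ∀ Y : ℝ, 2 ^ (2 * d) / ((∏ i, α i) ^ 2 * (t * w) ^ (2 * d + 2)) *
      (t ^ (2 * d + 2) * Y) = 2 ^ (2 * d) / ((∏ i, α i) ^ 2 * w ^ (2 * d + 2)) * Y := by
    intro Y
    rw [mul_pow]
    have := t0.ne'
    field_simp
  rw [e1] at h
  refine h.trans (le_of_eq ?_)
  rw [mul_left_comm, Finset.mul_sum (a := t ^ 2)]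
  congr 1
  refine Finset.sum_congr rfl fun i _ => ?_
  ring
end

section
/- For every point (p, w) ∈ ℝ^k × ℝ with w ≠ 0, the map Exp is differentiable at (p, w), and the determinant of its differential (a linear endomorphism of ℝ^k × ℝ ≅ ℝ^{k+1}) equals (2^{2d}/(α²·w^{2d+2})) · Σ_{i=1}^d ‖pⁱ‖² · (∏_{j≠i} sin²(α_j·w/2)) · sin(α_i·w/2) · (sin(α_i·w/2) − (α_i·w/2)·cos(α_i·w/2)), where α := ∏_{i=1}^d α_i. -/
open Finset

/-- The phase space `ℝ^k × ℝ` of a corank-1 Carnot group, written in blocks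
`(p⁰, p¹, …, p^d, w)` with `p⁰ ∈ ℝ^{k-2d}`, `pⁱ ∈ ℝ²` and `w ∈ ℝ`. -/
abbrev E (d k : ℕ) : Type := (Fin (k - 2 * d) → ℝ) × (Fin d → ℝ × ℝ) × ℝ

/-- The matrix `J₂ = [[0,1],[-1,0]]` acting on `ℝ²`. -/
def J2 (v : ℝ × ℝ) : ℝ × ℝ := (v.2, -v.1)

/-- The sub-Riemannian exponential map at the identity of a corank-1 Carnot group,
in exponential coordinates. -/
noncomputable def ExpMap (d k : ℕ) (α : Fin d → ℝ) (q : E d k) : E d k :=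
  if q.2.2 = 0 then (q.1, q.2.1, 0)
  else
    (q.1,
     fun i =>
       (Real.sin (α i * q.2.2) / (α i * q.2.2)) • q.2.1 i +
         ((Real.cos (α i * q.2.2) - 1) / (α i * q.2.2)) • J2 (q.2.1 i),
     ∑ i, ((q.2.1 i).1 ^ 2 + (q.2.1 i).2 ^ 2) *
       (α i * q.2.2 - Real.sin (α i * q.2.2)) / (2 * α i * q.2.2 ^ 2))

lemma det_arrow {U : Type*} [AddCommGroup U] [Module ℝ U] [Module.Finite ℝ U]
    (A B : U →ₗ[ℝ] U) (hAB : ∀ u, A (B u) = u) (v : U) (l : U →ₗ[ℝ] ℝ) (c : ℝ)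
    (L : (U × ℝ) →ₗ[ℝ] (U × ℝ))
    (hL : ∀ u s, L (u, s) = (A u + s • v, l u + s * c)) :
    LinearMap.det L = LinearMap.det A * (c - l (B v)) := by
  have : L = (A.prodMap LinearMap.id) ∘ₗ
      (LinearMap.transvection (l ∘ₗ LinearMap.fst ℝ U ℝ) ((0, 1) : U × ℝ)) ∘ₗ
      (LinearMap.transvection (LinearMap.snd ℝ U ℝ) ((B v, c - l (B v) - 1) : U × ℝ)) := by
    apply LinearMap.ext
    rintro ⟨u, s⟩
    rw [hL]
    simp only [LinearMap.comp_apply, LinearMap.transvection.apply, LinearMap.prodMap_apply,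
      LinearMap.fst_apply, LinearMap.snd_apply, Prod.smul_mk, Prod.mk_add_mk, LinearMap.id_apply,
      map_add, map_smul, hAB, smul_eq_mul, smul_zero, add_zero]
    congr 1
    ring
  rw [this, LinearMap.det_comp, LinearMap.det_comp, LinearMap.det_prodMap,
    LinearMap.transvection.det, LinearMap.transvection.det]
  simp

noncomputable def rot (a b : ℝ) : (ℝ × ℝ) →ₗ[ℝ] (ℝ × ℝ) :=
  Matrix.toLin (Module.Basis.finTwoProd ℝ) (Module.Basis.finTwoProd ℝ) !![a, b; -b, a]

lemma rot_apply (a b : ℝ) (v : ℝ × ℝ) : rot a b v = (a * v.1 + b * v.2, -b * v.1 + a * v.2) := by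
  rw [rot, Matrix.toLin_finTwoProd_apply]

lemma rot_det (a b : ℝ) : LinearMap.det (rot a b) = a ^ 2 + b ^ 2 := by
  rw [rot, LinearMap.det_toLin, Matrix.det_fin_two_of]; ring

noncomputable def rots {d : ℕ} (a b : Fin d → ℝ) : (Fin d → ℝ × ℝ) →ₗ[ℝ] (Fin d → ℝ × ℝ) :=
  LinearMap.pi (fun i ↦ (rot (a i) (b i)).comp (LinearMap.proj i))

lemma rots_apply {d : ℕ} (a b : Fin d → ℝ) (u : Fin d → ℝ × ℝ) (i : Fin d) :
    rots a b u i = rot (a i) (b i) (u i) := rfl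

lemma rots_det {d : ℕ} (a b : Fin d → ℝ) :
    LinearMap.det (rots a b) = ∏ i, (a i ^ 2 + b i ^ 2) := by
  rw [rots, LinearMap.det_pi]; simp [rot_det]

lemma det_nonsing {d : ℕ} (a b a' b' c c' : Fin d → ℝ) (p : Fin d → ℝ × ℝ)
    (h : ∀ i, a i ^ 2 + b i ^ 2 ≠ 0)
    (L : ((Fin d → ℝ × ℝ) × ℝ) →ₗ[ℝ] ((Fin d → ℝ × ℝ) × ℝ))
    (hL : ∀ u s, L (u, s) = (rots a b u + s • rots a' b' p,
      (∑ i, 2 * c i * ((p i).1 * (u i).1 + (p i).2 * (u i).2)) +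
        s * ∑ i, ((p i).1 ^ 2 + (p i).2 ^ 2) * c' i)) :
    LinearMap.det L = ∑ i, ((p i).1 ^ 2 + (p i).2 ^ 2) *
      (c' i * (a i ^ 2 + b i ^ 2) - c i * (2 * a i * a' i + 2 * b i * b' i)) *
      ∏ j ∈ univ.erase i, (a j ^ 2 + b j ^ 2) := by
  let l : (Fin d → ℝ × ℝ) →ₗ[ℝ] ℝ :=
    ∑ i, (2 * c i) • (((p i).1 • LinearMap.fst ℝ ℝ ℝ + (p i).2 • LinearMap.snd ℝ ℝ ℝ) ∘ₗ
      LinearMap.proj i)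
  have hl : ∀ u, l u = ∑ i, 2 * c i * ((p i).1 * (u i).1 + (p i).2 * (u i).2) := by
    intro u; simp [l]
  rw [det_arrow (rots a b) (rots (fun i => a i / (a i ^ 2 + b i ^ 2))
    (fun i => - b i / (a i ^ 2 + b i ^ 2))) ?_ (rots a' b' p) l
    (∑ i, ((p i).1 ^ 2 + (p i).2 ^ 2) * c' i) L ?_, rots_det, hl, ← Finset.sum_sub_distrib,
    Finset.mul_sum]
  · refine Finset.sum_congr rfl fun i _ => ?_
    rw [← Finset.mul_prod_erase univ _ (Finset.mem_univ i)]
    simp only [rots_apply, rot_apply]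
    have := h i
    field_simp
    ring
  · intro u
    funext i
    simp only [rots_apply, rot_apply]
    have := h i
    ext <;> field_simp <;> ring
  · intro u s
    rw [hL, hl]

lemma det_all {d : ℕ} (a b a' b' c c' : Fin d → ℝ) (p : Fin d → ℝ × ℝ)
    (L : ((Fin d → ℝ × ℝ) × ℝ) →L[ℝ] ((Fin d → ℝ × ℝ) × ℝ))
    (hL : ∀ u s, L (u, s) = (rots a b u + s • rots a' b' p,
      (∑ i, 2 * c i * ((p i).1 * (u i).1 + (p i).2 * (u i).2)) +
        s * ∑ i, ((p i).1 ^ 2 + (p i).2 ^ 2) * c' i)) :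
    L.det = ∑ i, ((p i).1 ^ 2 + (p i).2 ^ 2) *
      (c' i * (a i ^ 2 + b i ^ 2) - c i * (2 * a i * a' i + 2 * b i * b' i)) *
      ∏ j ∈ univ.erase i, (a j ^ 2 + b j ^ 2) := by
  let K : ((Fin d → ℝ × ℝ) × ℝ) →L[ℝ] ((Fin d → ℝ × ℝ) × ℝ) :=
    (ContinuousLinearMap.fst ℝ _ _).prod 0
  let F : ℝ → ℝ := fun t => (L + t • K).det
  let G : ℝ → ℝ := fun t => ∑ i, ((p i).1 ^ 2 + (p i).2 ^ 2) *
      (c' i * ((a i + t) ^ 2 + b i ^ 2) - c i * (2 * (a i + t) * a' i + 2 * b i * b' i)) *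
      ∏ j ∈ univ.erase i, ((a j + t) ^ 2 + b j ^ 2)
  have hF : Continuous F := ContinuousLinearMap.continuous_det.comp (by fun_prop)
  have hG : Continuous G := by fun_prop
  have hfin : (Set.range (fun i => - a i)).Finite := Set.finite_range _
  have hd : Dense (Set.range (fun i => - a i))ᶜ := hfin.countable.dense_compl ℝ
  have hFG : F = G := by
    refine Continuous.ext_on hd hF hG ?_
    intro t ht
    refine det_nonsing (fun i => a i + t) b a' b' c c' p ?_ _ ?_
    · intro i hi
      apply ht
      refine ⟨i, ?_⟩
      have : (a i + t) ^ 2 = 0 := by nlinarith [sq_nonneg (a i + t), sq_nonneg (b i)]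
      have := pow_eq_zero_iff (two_ne_zero) |>.1 this
      simp only; linarith
    · intro u s
      have : (L + t • K) (u, s) = L (u, s) + t • (u, 0) := rfl
      refine this.trans ?_
      rw [hL]
      refine Prod.ext ?_ ?_
      · funext i
        simp only [Prod.smul_mk, Prod.mk_add_mk, Pi.add_apply, Pi.smul_apply, rots_apply, rot_apply]
        ext <;> simp <;> ring
      · simp
  have := congrFun hFG 0
  simpa [F, G] using this

noncomputable def fA (α w : ℝ) : ℝ := Real.sin (α * w) / (α * w)
noncomputable def fB (α w : ℝ) : ℝ := (Real.cos (α * w) - 1) / (α * w)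
noncomputable def fC (α w : ℝ) : ℝ := (α * w - Real.sin (α * w)) / (2 * α * w ^ 2)
noncomputable def fA' (α w : ℝ) : ℝ :=
  (Real.cos (α * w) * α * (α * w) - Real.sin (α * w) * α) / (α * w) ^ 2
noncomputable def fB' (α w : ℝ) : ℝ :=
  (-Real.sin (α * w) * α * (α * w) - (Real.cos (α * w) - 1) * α) / (α * w) ^ 2
noncomputable def fC' (α w : ℝ) : ℝ :=
  ((α - Real.cos (α * w) * α) * (2 * α * w ^ 2) - (α * w - Real.sin (α * w)) * (2 * α * (2 * w))) /
    (2 * α * w ^ 2) ^ 2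

lemma hmul (α w : ℝ) : HasDerivAt (fun w : ℝ => α * w) α w := by
  simpa using (hasDerivAt_id w).const_mul α

lemma hfA (α w : ℝ) (hα : α ≠ 0) (hw : w ≠ 0) : HasDerivAt (fA α) (fA' α w) w :=
  (hmul α w).sin.div (hmul α w) (mul_ne_zero hα hw)

lemma hfB (α w : ℝ) (hα : α ≠ 0) (hw : w ≠ 0) : HasDerivAt (fB α) (fB' α w) w :=
  ((hmul α w).cos.sub_const 1).div (hmul α w) (mul_ne_zero hα hw)

lemma hfC (α w : ℝ) (hα : α ≠ 0) (hw : w ≠ 0) : HasDerivAt (fC α) (fC' α w) w := by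
  refine ((hmul α w).sub (hmul α w).sin).div ?_ (by positivity)
  simpa using (hasDerivAt_pow 2 w).const_mul (2 * α)

lemma key1 (α w : ℝ) :
    fA α w ^ 2 + fB α w ^ 2 = 4 / (α ^ 2 * w ^ 2) * Real.sin (α * w / 2) ^ 2 := by
  have e : α * w = 2 * (α * w / 2) := by ring
  have h := Real.sin_sq_add_cos_sq (α * w)
  have h2 := Real.cos_sq (α * w / 2)
  have h3 := Real.sin_sq_add_cos_sq (α * w / 2)
  rw [← e] at h2
  rw [fA, fB, div_pow, div_pow, ← add_div, mul_pow, div_mul_eq_mul_div]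
  congr 1
  linear_combination h + 4 * h2 - 4 * h3

lemma key2 (α w : ℝ) (hα : α ≠ 0) (hw : w ≠ 0) :
    fC' α w * (fA α w ^ 2 + fB α w ^ 2) -
      fC α w * (2 * fA α w * fA' α w + 2 * fB α w * fB' α w) =
    4 / (α ^ 2 * w ^ 4) * (Real.sin (α * w / 2) *
      (Real.sin (α * w / 2) - α * w / 2 * Real.cos (α * w / 2))) := by
  have e : α * w = 2 * (α * w / 2) := by ring
  have h1 : Real.sin (α * w) = 2 * Real.sin (α * w / 2) * Real.cos (α * w / 2) := by
    rw [← Real.sin_two_mul, ← e]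
  have h2 : Real.cos (α * w) = 1 - 2 * Real.sin (α * w / 2) ^ 2 := by
    rw [← Real.cos_two_mul_eq_one_sub, ← e]
  have h3 := Real.cos_sq' (α * w / 2)
  simp only [fA, fB, fC, fA', fB', fC', h1, h2]
  generalize Real.sin (α * w / 2) = s at *
  generalize Real.cos (α * w / 2) = c at *
  field_simp
  ring_nf
  have h4 : c ^ 4 = (1 - s ^ 2) ^ 2 := by rw [← h3]; ring
  have h5 : c ^ 3 = c * (1 - s ^ 2) := by rw [← h3]; ring
  simp only [h3, h4, h5]
  ring

noncomputable def D2 {d : ℕ} (α : Fin d → ℝ) (p : Fin d → ℝ × ℝ) (w : ℝ) :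
    ((Fin d → ℝ × ℝ) × ℝ) →L[ℝ] ((Fin d → ℝ × ℝ) × ℝ) :=
  LinearMap.toContinuousLinearMap
    { toFun := fun q => (rots (fun i => fA (α i) w) (fun i => fB (α i) w) q.1 +
        q.2 • rots (fun i => fA' (α i) w) (fun i => fB' (α i) w) p,
        (∑ i, 2 * fC (α i) w * ((p i).1 * (q.1 i).1 + (p i).2 * (q.1 i).2)) +
        q.2 * ∑ i, ((p i).1 ^ 2 + (p i).2 ^ 2) * fC' (α i) w)
      map_add' := by
        intro x y
        refine Prod.ext ?_ ?_
        · simp [add_smul]; abel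
        · simp only [Prod.fst_add, Prod.snd_add, Pi.add_apply, add_mul]
          rw [add_add_add_comm, ← Finset.sum_add_distrib]
          congr 1
          refine Finset.sum_congr rfl fun i _ => ?_
          ring
      map_smul' := by
        intro m x
        refine Prod.ext ?_ ?_
        · simp [mul_smul]
        · simp only [Prod.smul_fst, Prod.smul_snd, Pi.smul_apply, smul_eq_mul, mul_add,
            RingHom.id_apply, Finset.mul_sum]
          congr 1 <;> refine Finset.sum_congr rfl fun i _ => ?_ <;> ring }

lemma D2_apply {d : ℕ} (α : Fin d → ℝ) (p : Fin d → ℝ × ℝ) (w : ℝ) (u : Fin d → ℝ × ℝ) (s : ℝ) :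
    D2 α p w (u, s) = (rots (fun i => fA (α i) w) (fun i => fB (α i) w) u +
        s • rots (fun i => fA' (α i) w) (fun i => fB' (α i) w) p,
        (∑ i, 2 * fC (α i) w * ((p i).1 * (u i).1 + (p i).2 * (u i).2)) +
        s * ∑ i, ((p i).1 ^ 2 + (p i).2 ^ 2) * fC' (α i) w) := rfl

noncomputable def F2 {d : ℕ} (α : Fin d → ℝ) (q : (Fin d → ℝ × ℝ) × ℝ) : (Fin d → ℝ × ℝ) × ℝ :=
  (fun i => (fA (α i) q.2 * (q.1 i).1 + fB (α i) q.2 * (q.1 i).2,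
    fA (α i) q.2 * (q.1 i).2 - fB (α i) q.2 * (q.1 i).1),
   ∑ i, ((q.1 i).1 ^ 2 + (q.1 i).2 ^ 2) * fC (α i) q.2)

lemma hasF2 {d : ℕ} (α : Fin d → ℝ) (hα : ∀ i, 0 < α i) (p : Fin d → ℝ × ℝ) (w : ℝ) (hw : w ≠ 0) :
    HasFDerivAt (F2 α) (D2 α p w) (p, w) := by
  have hsnd : HasFDerivAt (fun q : (Fin d → ℝ × ℝ) × ℝ => q.2)
    (ContinuousLinearMap.snd ℝ _ _) (p, w) := hasFDerivAt_snd
  have hA := fun i => (hfA (α i) w (hα i).ne' hw).comp_hasFDerivAt (p, w) hsnd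
  have hB := fun i => (hfB (α i) w (hα i).ne' hw).comp_hasFDerivAt (p, w) hsnd
  have hC := fun i => (hfC (α i) w (hα i).ne' hw).comp_hasFDerivAt (p, w) hsnd
  have hu := fun i => ((ContinuousLinearMap.proj (R := ℝ) (φ := fun _ : Fin d => ℝ × ℝ) i) ∘L
    (ContinuousLinearMap.fst ℝ (Fin d → ℝ × ℝ) ℝ)).hasFDerivAt (x := (p, w))
  have h1 := fun i => (hu i).fst
  have h2 := fun i => (hu i).snd
  have X1 := fun i => ((hA i).mul (h1 i)).add ((hB i).mul (h2 i))
  have X2 := fun i => ((hA i).mul (h2 i)).sub ((hB i).mul (h1 i))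
  have Z := HasFDerivAt.fun_sum (u := univ)
    (fun i (_ : i ∈ univ) => (((h1 i).pow 2).add ((h2 i).pow 2)).mul (hC i))
  have T := (hasFDerivAt_pi.2 (fun i => (X1 i).prodMk (X2 i))).prodMk Z
  refine (T.congr_fderiv ?_)
  apply ContinuousLinearMap.ext
  rintro ⟨u, s⟩
  rw [D2_apply]
  refine Prod.ext ?_ ?_
  · funext i
    simp only [rots_apply, rot_apply, Pi.add_apply, Pi.smul_apply]
    ext <;> simp <;> ring
  · simp [Finset.mul_sum]
    rw [← Finset.sum_add_distrib]
    refine Finset.sum_congr rfl fun i _ => ?_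
    ring

/-- Lemma 3.4 of the paper: for `w ≠ 0` the exponential map is differentiable at
`(p, w)` and the determinant of its differential is given by the explicit formula. -/
theorem ExpMap_jacobian (d k : ℕ) (hd : 1 ≤ d) (hk : 2 * d ≤ k)
    (α : Fin d → ℝ) (hα : ∀ i, 0 < α i) (hmono : Monotone α)
    (p0 : Fin (k - 2 * d) → ℝ) (p : Fin d → ℝ × ℝ) (w : ℝ) (hw : w ≠ 0) :
    DifferentiableAt ℝ (ExpMap d k α) (p0, p, w) ∧
    LinearMap.det (fderiv ℝ (ExpMap d k α) (p0, p, w) : E d k →ₗ[ℝ] E d k) =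
      2 ^ (2 * d) / ((∏ i, α i) ^ 2 * w ^ (2 * d + 2)) *
        ∑ i, ((p i).1 ^ 2 + (p i).2 ^ 2) *
          (∏ j ∈ univ.erase i, Real.sin (α j * w / 2) ^ 2) *
          Real.sin (α i * w / 2) *
          (Real.sin (α i * w / 2) - α i * w / 2 * Real.cos (α i * w / 2)) := by
  have hF := hasF2 α hα p w hw
  have h0 : HasFDerivAt (fun q : E d k => (q.1, F2 α q.2))
      ((ContinuousLinearMap.id ℝ (Fin (k - 2 * d) → ℝ)).prodMap (D2 α p w)) (p0, p, w) :=
    HasFDerivAt.prodMap (p0, p, w) (hasFDerivAt_id p0) hF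
  have hE : HasFDerivAt (ExpMap d k α)
      ((ContinuousLinearMap.id ℝ (Fin (k - 2 * d) → ℝ)).prodMap (D2 α p w)) (p0, p, w) := by
    refine h0.congr_of_eventuallyEq ?_
    have hev : ∀ᶠ q : E d k in nhds (p0, p, w), q.2.2 ≠ 0 := by
      have hc : ContinuousAt (fun q : E d k => q.2.2) (p0, p, w) := by fun_prop
      exact hc.eventually_ne hw
    filter_upwards [hev] with q hq
    rw [ExpMap, if_neg hq]
    refine Prod.ext rfl (Prod.ext ?_ ?_)
    · funext i
      simp only [F2, J2, fA, fB]
      ext <;> simp <;> ring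
    · simp only [F2, fC]
      refine Finset.sum_congr rfl fun i _ => ?_
      ring
  refine ⟨hE.differentiableAt, ?_⟩
  rw [hE.fderiv]
  have hdet : LinearMap.det (((ContinuousLinearMap.id ℝ (Fin (k - 2 * d) → ℝ)).prodMap
      (D2 α p w) : E d k →L[ℝ] E d k) : E d k →ₗ[ℝ] E d k) = (D2 α p w).det := by
    rw [ContinuousLinearMap.coe_prodMap, LinearMap.det_prodMap]
    simp [ContinuousLinearMap.det]
  rw [hdet, det_all _ _ _ _ _ _ p (D2 α p w) (D2_apply α p w), Finset.mul_sum]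
  refine Finset.sum_congr rfl fun i _ => ?_
  rw [key2 (α i) w (hα i).ne' hw]
  simp only [key1]
  rw [Finset.prod_mul_distrib]
  have hP : (4 / (α i ^ 2 * w ^ 4)) * ∏ j ∈ univ.erase i, (4 / (α j ^ 2 * w ^ 2)) =
      2 ^ (2 * d) / ((∏ i, α i) ^ 2 * w ^ (2 * d + 2)) := by
    have e : (4 / (α i ^ 2 * w ^ 4)) = (4 / (α i ^ 2 * w ^ 2)) / w ^ 2 := by
      rw [div_div, mul_assoc, ← pow_add]
    rw [e, div_mul_eq_mul_div,
      Finset.mul_prod_erase univ (fun j => 4 / (α j ^ 2 * w ^ 2)) (Finset.mem_univ i),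
      Finset.prod_div_distrib, Finset.prod_mul_distrib, Finset.prod_pow]
    simp only [Finset.prod_const, Finset.card_univ, Fintype.card_fin]
    rw [div_div, mul_assoc, ← pow_mul, ← pow_add, pow_mul]
    norm_num
  rw [← hP]
  ring
end

section
/- Let (p, w) and (q, v) be two points of D such that ‖p‖ = ‖q‖ (Euclidean norms in ℝ^k) and Exp(p, w) = Exp(q, v). Then (p, w) = (q, v). In other words, Exp is injective on each sphere-slice of the cotangent injectivity domain D. -/
lemma sinc_lt_aux {x y : ℝ} (hx : 0 ≤ x) (hxy : x < y) (hy : y < Real.pi) :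
    Real.sinc y < Real.sinc x := by
  have hy0 : 0 < y := lt_of_le_of_lt hx hxy
  rcases hx.eq_or_lt with h | h
  · subst h
    rw [Real.sinc_zero, Real.sinc_of_ne_zero hy0.ne', div_lt_one hy0]
    exact Real.sin_lt hy0
  · rw [Real.sinc_of_ne_zero hy0.ne', Real.sinc_of_ne_zero h.ne']
    have hc := strictConcaveOn_sin_Icc.secant_strict_mono (a := 0) (x := x) (y := y)
      ⟨le_rfl, Real.pi_pos.le⟩ ⟨h.le, (hxy.trans hy).le⟩ ⟨hy0.le, hy.le⟩ h.ne' hy0.ne' hxy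
    simpa using hc

lemma sinc_pos_aux {x : ℝ} (hx : 0 ≤ x) (hy : x < Real.pi) : 0 < Real.sinc x := by
  rcases hx.eq_or_lt with h | h
  · subst h; simp
  · rw [Real.sinc_of_ne_zero h.ne']
    exact div_pos (Real.sin_pos_of_pos_of_lt_pi h hy) h

lemma sinc_abs_aux (x : ℝ) : Real.sinc |x| = Real.sinc x := by
  rcases abs_choice x with h | h <;> rw [h]
  exact Real.sinc_neg x

lemma coef_aux (t : ℝ) :
    Real.sinc t ^ 2 + ((Real.cos t - 1) / t) ^ 2 = Real.sinc |t / 2| ^ 2 := by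
  rw [sinc_abs_aux]
  by_cases h : t = 0
  · subst h; simp
  · rw [Real.sinc_of_ne_zero h, Real.sinc_of_ne_zero (by positivity)]
    have h2 : t = 2 * (t / 2) := by ring
    have h1 : Real.sin (t / 2) ^ 2 = (1 - Real.cos t) / 2 := by
      have := Real.cos_sq (t / 2)
      rw [← h2] at this
      have h3 := Real.sin_sq_add_cos_sq (t / 2)
      linarith
    have h3 := Real.sin_sq_add_cos_sq t
    rw [div_pow, div_pow, div_pow, h1]
    field_simp
    linear_combination h3

lemma exp_block {d k : ℕ} {α : Fin d → ℝ} (hα : ∀ i, 0 < α i) (p0 : Fin (k - 2 * d) → ℝ)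
    (p : Fin d → ℝ × ℝ) (w : ℝ) (i : Fin d) :
    (ExpMap d k α (p0, p, w)).2.1 i =
      (Real.sinc (α i * w) * (p i).1 + ((Real.cos (α i * w) - 1) / (α i * w)) * (p i).2,
       Real.sinc (α i * w) * (p i).2 - ((Real.cos (α i * w) - 1) / (α i * w)) * (p i).1) := by
  by_cases h : w = 0
  · subst h; simp [ExpMap]
  · have : α i * w ≠ 0 := mul_ne_zero (hα i).ne' h
    rw [Real.sinc_of_ne_zero this]
    simp only [ExpMap, if_neg h, J2]
    ext <;> simp <;> ring

lemma sq_pos_aux {a : ℝ × ℝ} (h : a ≠ 0) : 0 < a.1 ^ 2 + a.2 ^ 2 := by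
  by_contra hc
  apply h
  ext
  · simp; nlinarith [sq_nonneg a.1, sq_nonneg a.2]
  · simp; nlinarith [sq_nonneg a.1, sq_nonneg a.2]

lemma exp_z {d k : ℕ} {α : Fin d → ℝ} (hα : ∀ i, 0 < α i) (p0 : Fin (k - 2 * d) → ℝ)
    (p : Fin d → ℝ × ℝ) (w : ℝ) (hp : ∃ i, p i ≠ 0) (hw : 0 < w) :
    0 < (ExpMap d k α (p0, p, w)).2.2 := by
  simp only [ExpMap, if_neg hw.ne']
  have key : ∀ i, 0 < α i * w - Real.sin (α i * w) := fun i =>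
    sub_pos.2 (Real.sin_lt (mul_pos (hα i) hw))
  obtain ⟨j, hj⟩ := hp
  apply Finset.sum_pos'
  · intro i _
    have := (key i).le
    have := (hα i)
    positivity
  · refine ⟨j, Finset.mem_univ _, ?_⟩
    have := key j
    have := hα j
    have := sq_pos_aux hj
    positivity

lemma exp_z_neg {d k : ℕ} {α : Fin d → ℝ} (p0 : Fin (k - 2 * d) → ℝ)
    (p : Fin d → ℝ × ℝ) (w : ℝ) :
    (ExpMap d k α (p0, p, -w)).2.2 = - (ExpMap d k α (p0, p, w)).2.2 := by
  by_cases h : w = 0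
  · subst h; simp [ExpMap]
  · simp only [ExpMap, if_neg h, neg_eq_zero]
    rw [← Finset.sum_neg_distrib]
    refine Finset.sum_congr rfl fun i _ => ?_
    simp only [mul_neg, Real.sin_neg]
    ring

lemma half_lt {d : ℕ} (hd : 1 ≤ d) {α : Fin d → ℝ} (hα : ∀ i, 0 < α i) (hmono : Monotone α)
    {w : ℝ} (hwD : |w| < 2 * Real.pi / α ⟨d - 1, Nat.sub_lt hd one_pos⟩) (i : Fin d) :
    |α i * w / 2| < Real.pi := by
  rw [lt_div_iff₀ (hα _)] at hwD
  have h1 : α i ≤ α ⟨d - 1, Nat.sub_lt hd one_pos⟩ := hmono (by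
    rw [Fin.le_def]; simp only; have := i.2; omega)
  rw [abs_div, abs_mul, abs_of_pos (hα i), abs_two]
  nlinarith [mul_le_mul_of_nonneg_right h1 (abs_nonneg w)]

lemma not_lt_aux (d k : ℕ) (hd : 1 ≤ d)
    (α : Fin d → ℝ) (hα : ∀ i, 0 < α i) (hmono : Monotone α)
    (p0 q0 : Fin (k - 2 * d) → ℝ) (p q : Fin d → ℝ × ℝ) (w v : ℝ)
    (hvD : |v| < 2 * Real.pi / α ⟨d - 1, Nat.sub_lt hd one_pos⟩)
    (hqD : ∃ i, q i ≠ 0)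
    (hnorm : ∑ i, ((p i).1 ^ 2 + (p i).2 ^ 2) = ∑ i, ((q i).1 ^ 2 + (q i).2 ^ 2))
    (hExp : ExpMap d k α (p0, p, w) = ExpMap d k α (q0, q, v)) : ¬ |w| < |v| := by
  intro hlt
  have hN : ∀ i, ((p i).1 ^ 2 + (p i).2 ^ 2) * Real.sinc |α i * w / 2| ^ 2 =
      ((q i).1 ^ 2 + (q i).2 ^ 2) * Real.sinc |α i * v / 2| ^ 2 := by
    intro i
    have h := congrFun (congrArg (fun e : E d k => e.2.1) hExp) i
    simp only [exp_block hα] at h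
    have h1 := congrArg Prod.fst h
    have h2 := congrArg Prod.snd h
    rw [← coef_aux, ← coef_aux]
    have e1 := congrArg (· ^ 2) h1
    have e2 := congrArg (· ^ 2) h2
    simp only at e1 e2
    linear_combination e1 + e2
  have hS : ∀ i, 0 < Real.sinc |α i * v / 2| ∧
      Real.sinc |α i * v / 2| < Real.sinc |α i * w / 2| := by
    intro i
    have hb := half_lt hd hα hmono hvD i
    refine ⟨sinc_pos_aux (abs_nonneg _) hb, sinc_lt_aux (abs_nonneg _) ?_ hb⟩
    rw [abs_div, abs_mul, abs_div, abs_mul, abs_of_pos (hα i), abs_two]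
    have := mul_lt_mul_of_pos_left hlt (hα i)
    linarith
  have hSq : ∀ i, 0 < Real.sinc |α i * v / 2| ^ 2 ∧
      Real.sinc |α i * v / 2| ^ 2 < Real.sinc |α i * w / 2| ^ 2 := by
    intro i
    obtain ⟨a, b⟩ := hS i
    exact ⟨by positivity, by nlinarith⟩
  have hlt' : ∑ i, ((p i).1 ^ 2 + (p i).2 ^ 2) < ∑ i, ((q i).1 ^ 2 + (q i).2 ^ 2) := by
    apply Finset.sum_lt_sum
    · intro i _
      obtain ⟨a, b⟩ := hSq i
      by_contra hc
      push Not at hc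
      have h0 : 0 ≤ (q i).1 ^ 2 + (q i).2 ^ 2 := by positivity
      have := mul_lt_mul_of_pos_right hc (a.trans b)
      rw [hN i] at this
      nlinarith [mul_le_mul_of_nonneg_left b.le h0]
    · obtain ⟨j, hj⟩ := hqD
      refine ⟨j, Finset.mem_univ _, ?_⟩
      obtain ⟨a, b⟩ := hSq j
      by_contra hc
      push Not at hc
      have h0 := sq_pos_aux hj
      have := mul_le_mul_of_nonneg_right hc (a.trans b).le
      rw [hN j] at this
      nlinarith [mul_lt_mul_of_pos_left b h0]
  exact hlt'.ne hnorm

/-- Injectivity of the exponential map on each sphere-slice of the cotangent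
injectivity domain `D = {(p,w) : |w| < 2π/α_d, ∃ i, pⁱ ≠ 0}` (Lemma 3.8 of the
paper): if two covectors in `D` have the same Euclidean norm (equal lengths of
the corresponding geodesics) and the same image under `Exp`, they coincide. -/
theorem ExpMap_injective_on_sphere (d k : ℕ) (hd : 1 ≤ d) (hk : 2 * d ≤ k)
    (α : Fin d → ℝ) (hα : ∀ i, 0 < α i) (hmono : Monotone α)
    (p0 q0 : Fin (k - 2 * d) → ℝ) (p q : Fin d → ℝ × ℝ) (w v : ℝ)
    (hwD : |w| < 2 * Real.pi / α ⟨d - 1, Nat.sub_lt hd one_pos⟩)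
    (hpD : ∃ i, p i ≠ 0)
    (hvD : |v| < 2 * Real.pi / α ⟨d - 1, Nat.sub_lt hd one_pos⟩)
    (hqD : ∃ i, q i ≠ 0)
    (hnorm : ∑ i, p0 i ^ 2 + ∑ i, ((p i).1 ^ 2 + (p i).2 ^ 2) =
             ∑ i, q0 i ^ 2 + ∑ i, ((q i).1 ^ 2 + (q i).2 ^ 2))
    (hExp : ExpMap d k α (p0, p, w) = ExpMap d k α (q0, q, v)) :
    p0 = q0 ∧ p = q ∧ w = v := by
  have h0 : p0 = q0 := by
    have h := congrArg (fun e : E d k => e.1) hExp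
    have e : ∀ (a : Fin (k - 2 * d) → ℝ) b c, (ExpMap d k α (a, b, c)).1 = a := by
      intro a b c
      unfold ExpMap
      split_ifs <;> rfl
    simpa only [e] using h
  subst h0
  have hnorm' := add_left_cancel hnorm
  have habs : |w| = |v| := le_antisymm
    (not_lt.1 (not_lt_aux d k hd α hα hmono p0 p0 q p v w hwD hpD hnorm'.symm hExp.symm))
    (not_lt.1 (not_lt_aux d k hd α hα hmono p0 p0 p q w v hvD hqD hnorm' hExp))
  have hz := congrArg (fun e : E d k => e.2.2) hExp
  change (ExpMap d k α (p0, p, w)).2.2 = (ExpMap d k α (p0, q, v)).2.2 at hz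
  have hwv : w = v := by
    rcases abs_eq_abs.1 habs with h | h
    · exact h
    · subst h
      rw [exp_z_neg] at hz
      rcases lt_trichotomy v 0 with hv | hv | hv
      · have a := exp_z hα p0 p (-v) hpD (by linarith)
        have b := exp_z hα p0 q (-v) hqD (by linarith)
        rw [exp_z_neg] at a b
        linarith
      · simp [hv]
      · have a := exp_z hα p0 p v hpD hv
        have b := exp_z hα p0 q v hqD hv
        linarith
  subst hwv
  refine ⟨rfl, ?_, rfl⟩
  funext i
  have h := congrFun (congrArg (fun e : E d k => e.2.1) hExp) i
  simp only [exp_block hα] at h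
  have h1 := congrArg Prod.fst h
  have h2 := congrArg Prod.snd h
  have hpos := pow_pos (sinc_pos_aux (abs_nonneg _) (half_lt hd hα hmono hwD i)) 2
  rw [← coef_aux] at hpos
  generalize Real.sinc (α i * w) = A at *
  generalize (Real.cos (α i * w) - 1) / (α i * w) = B at *
  ext
  · apply mul_left_cancel₀ hpos.ne'
    linear_combination A * h1 - B * h2
  · apply mul_left_cancel₀ hpos.ne'
    linear_combination B * h1 + A * h2
end

section
/- Let K ∈ ℝ and N > 1, and suppose the measure contraction property MCP(K, N) holds at x, i.e. for every bounded measurable Ω ⊆ X with 0 < μ(Ω) < ∞ (and, if K > 0, with Ω contained in the metric ball B(x, π·√((N−1)/K))) and every t ∈ [0,1]: μ(Ω_t) ≥ ∫_Ω t·(s_K(t·dist(x,z)/√(N−1))/s_K(dist(x,z)/√(N−1)))^{N−1} dμ(z). Then for every real s > N and every bounded measurable Ω ⊆ X with 0 < μ(Ω) < ∞ (contained in B(x, π·√((N−1)/K)) if K > 0), the limsup as t → 0⁺ of μ(Ω_t)/t^s equals +∞. Consequently the geodesic dimension 𝒩(x) := inf{s > 0 : sup_Ω limsup_{t→0⁺}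 μ(Ω_t)/(t^s·μ(Ω)) = +∞} satisfies 𝒩(x) ≤ N. -/
open MeasureTheory Metric Filter Set

/-- The comparison function `s_K` of constant curvature `K`. -/
noncomputable def sK (K r : ℝ) : ℝ :=
  if 0 < K then Real.sin (Real.sqrt K * r) / Real.sqrt K
  else if K = 0 then r
  else Real.sinh (Real.sqrt (-K) * r) / Real.sqrt (-K)

lemma aux_sin (θ t : ℝ) (h0 : 0 < θ) (h1 : θ < Real.pi) (ht0 : 0 < t) (ht1 : t ≤ 1) :
    t * Real.sin θ ≤ Real.sin (t * θ) := by
  have := strictConcaveOn_sin_Icc.concaveOn.2 (x := θ) (y := 0) ⟨h0.le, h1.le⟩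
    ⟨le_refl _, Real.pi_pos.le⟩ ht0.le (sub_nonneg.2 ht1) (by ring)
  simpa using this

lemma aux_sinh_le (θ : ℝ) (h0 : 0 ≤ θ) : Real.sinh θ ≤ θ * Real.cosh θ := by
  have hm : MonotoneOn (fun y : ℝ => y * Real.cosh y - Real.sinh y) (Ici 0) := by
    apply monotoneOn_of_deriv_nonneg (convex_Ici 0)
    · fun_prop
    · fun_prop
    · intro y hy
      simp only [interior_Ici, mem_Ioi] at hy
      have : HasDerivAt (fun y : ℝ => y * Real.cosh y - Real.sinh y)
          (1 * Real.cosh y + y * Real.sinh y - Real.cosh y) y :=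
        ((hasDerivAt_id y).mul (Real.hasDerivAt_cosh y)).sub (Real.hasDerivAt_sinh y)
      rw [this.deriv]
      have := Real.sinh_pos_iff.2 hy
      nlinarith [mul_pos hy this]
  have := hm (mem_Ici.2 le_rfl) (mem_Ici.2 h0) h0
  simp at this
  linarith

lemma aux_ratio (K N R : ℝ) (hN : 1 < N) : ∃ c : ℝ, 0 < c ∧ ∀ d : ℝ, 0 < d → d ≤ R →
    (0 < K → d < Real.pi * Real.sqrt ((N - 1) / K)) → ∀ t : ℝ, 0 < t → t ≤ 1 →
    c * t ≤ sK K (t * d / Real.sqrt (N - 1)) / sK K (d / Real.sqrt (N - 1)) := by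
  have hn : 0 < Real.sqrt (N - 1) := Real.sqrt_pos.2 (by linarith)
  set n := Real.sqrt (N - 1) with hndef
  rcases lt_trichotomy K 0 with hK | hK | hK
  · have hk : 0 < Real.sqrt (-K) := Real.sqrt_pos.2 (by linarith)
    set k := Real.sqrt (-K) with hkdef
    refine ⟨1 / Real.cosh (k * (R / n)), by have := Real.cosh_pos (k * (R / n)); positivity, ?_⟩
    intro d hd hdR _ t ht ht1
    have e1 : k * (t * d / n) = t * (k * (d / n)) := by ring
    simp only [sK, not_lt.2 hK.le, hK.ne, if_false, ← hkdef, e1]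
    have hθ : 0 < k * (d / n) := by positivity
    have hle : k * (d / n) ≤ k * (R / n) := by gcongr
    set θ := k * (d / n)
    have hs := Real.sinh_pos_iff.2 hθ
    rw [div_div_div_cancel_right₀ hk.ne', le_div_iff₀ hs, one_div, inv_mul_eq_div,
      div_mul_eq_mul_div, div_le_iff₀ (Real.cosh_pos _)]
    have h1 : t * θ ≤ Real.sinh (t * θ) := Real.self_le_sinh_iff.2 (by positivity)
    have h2 := aux_sinh_le θ hθ.le
    have h3 : Real.cosh θ ≤ Real.cosh (k * (R / n)) := by
      rw [Real.cosh_le_cosh, abs_of_pos hθ, abs_of_pos (hθ.trans_le hle)]; exact hle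
    have h4 := Real.cosh_pos (k * (R / n))
    calc t * Real.sinh θ ≤ t * (θ * Real.cosh θ) := by gcongr
      _ = t * θ * Real.cosh θ := by ring
      _ ≤ t * θ * Real.cosh (k * (R / n)) := by gcongr
      _ ≤ _ := by gcongr
  · refine ⟨1, one_pos, ?_⟩
    intro d hd hdR _ t ht ht1
    subst hK
    simp only [sK, lt_irrefl, if_false, if_true]
    apply le_of_eq
    field_simp
  · have hk : 0 < Real.sqrt K := Real.sqrt_pos.2 hK
    refine ⟨1, one_pos, ?_⟩
    intro d hd hdR hdK t ht ht1
    have hdK := hdK hK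
    rw [Real.sqrt_div (by linarith), ← hndef] at hdK
    set k := Real.sqrt K with hkdef
    have e1 : k * (t * d / n) = t * (k * (d / n)) := by ring
    simp only [sK, hK, if_true, ← hkdef, e1]
    have hθ : 0 < k * (d / n) := by positivity
    have hlt : k * (d / n) < Real.pi := by
      rw [← mul_div_assoc, lt_div_iff₀ hk] at hdK
      rw [← mul_div_assoc, div_lt_iff₀ hn]
      linarith
    rw [div_div_div_cancel_right₀ hk.ne', le_div_iff₀ (Real.sin_pos_of_pos_of_lt_pi hθ hlt), one_mul]
    exact aux_sin _ _ hθ hlt ht ht1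

lemma aux_tendsto (f : ℝ → ENNReal) (a N s : ℝ) (ha : 0 < a) (hs : N < s) (m : ENNReal)
    (hm0 : 0 < m) (hm : m < ⊤)
    (hf : ∀ t : ℝ, 0 < t → t ≤ 1 → ENNReal.ofReal (a * t ^ N) ≤ f t) :
    Filter.limsup (fun t : ℝ => f t / (ENNReal.ofReal (t ^ s) * m)) (nhdsWithin 0 (Ioi 0)) = ⊤ := by
  apply Tendsto.limsup_eq
  have hM : 0 < m.toReal := ENNReal.toReal_pos hm0.ne' hm.ne
  have h1 : Tendsto (fun t : ℝ => a / m.toReal * t ^ (N - s)) (nhdsWithin 0 (Ioi 0)) atTop :=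
    (tendsto_rpow_neg_nhdsGT_zero (by linarith)).const_mul_atTop (by positivity)
  have h2 := ENNReal.tendsto_ofReal_nhds_top.2 h1
  refine tendsto_of_tendsto_of_tendsto_of_le_of_le' h2 tendsto_const_nhds ?_
    (Eventually.of_forall fun _ => le_top)
  filter_upwards [Ioc_mem_nhdsGT (zero_lt_one (α := ℝ))] with t ht
  have hts : 0 < t ^ s := Real.rpow_pos_of_pos ht.1 _
  calc ENNReal.ofReal (a / m.toReal * t ^ (N - s))
      = ENNReal.ofReal (a * t ^ N) / (ENNReal.ofReal (t ^ s) * m) := by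
        rw [← ENNReal.ofReal_toReal hm.ne, ← ENNReal.ofReal_mul hts.le,
          ← ENNReal.ofReal_div_of_pos (by positivity), ENNReal.toReal_ofReal hM.le,
          Real.rpow_sub ht.1]
        congr 1
        field_simp
    _ ≤ _ := by gcongr; exact hf t ht.1 ht.2

/-- Theorem 1.8 of the paper: on a metric measure space with negligible cut
locus at `x`, the measure contraction property `MCP(K, N)` at `x` implies that
for every `s > N` and every bounded measurable set `Ω` of positive finite
measure (contained in the comparison ball if `K > 0`), the limsup of
`μ(Ω_t)/t^s` as `t → 0⁺` is `+∞`; consequently the geodesic dimension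
`𝒩(x)` is at most `N`. -/
theorem MCP_implies_geodesic_dimension_le {X : Type*} [MetricSpace X]
    [MeasurableSpace X] [BorelSpace X] (μ : Measure X)
    (hball : ∀ (y : X) (r : ℝ), 0 < r → 0 < μ (ball y r) ∧ μ (ball y r) < ⊤)
    (x : X) (C : Set X) (hC : μ C = 0) (Φ : X → ℝ → X)
    (hΦ : ∀ y ∉ C, Φ y 0 = x ∧ Φ y 1 = y ∧
      ∀ s ∈ Icc (0 : ℝ) 1, ∀ t ∈ Icc (0 : ℝ) 1,
        dist (Φ y s) (Φ y t) = |s - t| * dist x y)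
    (K N : ℝ) (hN : 1 < N)
    (hMCP : ∀ Ω : Set X, MeasurableSet Ω → Bornology.IsBounded Ω →
      0 < μ Ω → μ Ω < ⊤ →
      (0 < K → Ω ⊆ ball x (Real.pi * Real.sqrt ((N - 1) / K))) →
      ∀ t ∈ Icc (0 : ℝ) 1,
        μ ((fun y => Φ y t) '' (Ω \ C)) ≥
          ∫⁻ z in Ω, ENNReal.ofReal
            (t * (sK K (t * dist x z / Real.sqrt (N - 1)) /
                  sK K (dist x z / Real.sqrt (N - 1))) ^ (N - 1)) ∂μ) :
    (∀ s : ℝ, N < s → ∀ Ω : Set X, MeasurableSet Ω → Bornology.IsBounded Ω →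
      0 < μ Ω → μ Ω < ⊤ →
      (0 < K → Ω ⊆ ball x (Real.pi * Real.sqrt ((N - 1) / K))) →
      Filter.limsup
        (fun t : ℝ => μ ((fun y => Φ y t) '' (Ω \ C)) / ENNReal.ofReal (t ^ s))
        (nhdsWithin 0 (Ioi 0)) = ⊤) ∧
    sInf {s : ℝ | 0 < s ∧
      (⨆ (Ω : Set X) (_ : MeasurableSet Ω ∧ Bornology.IsBounded Ω ∧
          0 < μ Ω ∧ μ Ω < ⊤),
        Filter.limsup
          (fun t : ℝ => μ ((fun y => Φ y t) '' (Ω \ C)) /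
            (ENNReal.ofReal (t ^ s) * μ Ω))
          (nhdsWithin 0 (Ioi 0))) = ⊤} ≤ N := by
  have key : ∀ Ω : Set X, MeasurableSet Ω → Bornology.IsBounded Ω →
      0 < μ Ω → μ Ω < ⊤ →
      (0 < K → Ω ⊆ ball x (Real.pi * Real.sqrt ((N - 1) / K))) →
      ∃ a : ℝ, 0 < a ∧ ∀ t : ℝ, 0 < t → t ≤ 1 →
        ENNReal.ofReal (a * t ^ N) ≤ μ ((fun y => Φ y t) '' (Ω \ C)) := by
    intro Ω hΩ hb hpos hfin hsub
    by_cases h0 : μ (Ω \ {x}) = 0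
    · have hx : 0 < μ (Ω ∩ {x}) := by
        have := measure_inter_add_sdiff (μ := μ) Ω (measurableSet_singleton x)
        rw [h0, add_zero] at this
        rwa [this]
      have hxΩ : x ∈ Ω := by
        obtain ⟨y, hy, hyx⟩ := nonempty_of_measure_ne_zero hx.ne'
        rw [mem_singleton_iff] at hyx
        rwa [← hyx]
      have hxC : x ∉ C := fun h => hx.ne' (measure_mono_null
        (fun y hy => by rw [mem_singleton_iff.1 hy.2]; exact h) hC)
      have hlt : μ (Ω ∩ {x}) < ⊤ := (measure_mono inter_subset_left).trans_lt hfin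
      refine ⟨(μ (Ω ∩ {x})).toReal, ENNReal.toReal_pos hx.ne' hlt.ne, ?_⟩
      intro t ht ht1
      have hΦx : Φ x t = x := by
        obtain ⟨e0, -, e⟩ := hΦ x hxC
        have := e t ⟨ht.le, ht1⟩ 0 ⟨le_rfl, zero_le_one⟩
        rw [dist_self, mul_zero, e0] at this
        exact dist_eq_zero.1 this
      calc ENNReal.ofReal ((μ (Ω ∩ {x})).toReal * t ^ N)
          ≤ ENNReal.ofReal ((μ (Ω ∩ {x})).toReal) := by
            apply ENNReal.ofReal_le_ofReal
            exact mul_le_of_le_one_right ENNReal.toReal_nonneg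
              (Real.rpow_le_one ht.le ht1 (by linarith))
        _ = μ (Ω ∩ {x}) := ENNReal.ofReal_toReal hlt.ne
        _ ≤ _ := by
            apply measure_mono
            rintro y ⟨_, hy⟩
            rw [mem_singleton_iff.1 hy]
            exact ⟨x, ⟨hxΩ, hxC⟩, hΦx⟩
    · obtain ⟨R, hR⟩ := hb.subset_closedBall x
      obtain ⟨c, hc, hcr⟩ := aux_ratio K N R hN
      have hlt : μ (Ω \ {x}) < ⊤ := (measure_mono sdiff_subset).trans_lt hfin
      have hM := ENNReal.toReal_pos h0 hlt.ne
      have hcp : 0 < c ^ (N - 1) := Real.rpow_pos_of_pos hc _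
      refine ⟨c ^ (N - 1) * (μ (Ω \ {x})).toReal, by positivity, ?_⟩
      intro t ht ht1
      refine le_trans ?_ (hMCP Ω hΩ hb hpos hfin hsub t ⟨ht.le, ht1⟩)
      have hmeas : MeasurableSet (Ω \ {x}) := hΩ.diff (measurableSet_singleton x)
      calc ENNReal.ofReal (c ^ (N - 1) * (μ (Ω \ {x})).toReal * t ^ N)
          = ENNReal.ofReal (t * (c * t) ^ (N - 1)) * μ (Ω \ {x}) := by
            conv_rhs => rw [← ENNReal.ofReal_toReal hlt.ne]
            rw [← ENNReal.ofReal_mul (by positivity), Real.mul_rpow hc.le ht.le,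
              Real.rpow_sub_one ht.ne']
            congr 1
            field_simp
        _ = ∫⁻ z in Ω \ {x}, ENNReal.ofReal (t * (c * t) ^ (N - 1)) ∂μ := by
            rw [setLIntegral_const]
        _ ≤ ∫⁻ z in Ω \ {x}, ENNReal.ofReal
            (t * (sK K (t * dist x z / Real.sqrt (N - 1)) /
                  sK K (dist x z / Real.sqrt (N - 1))) ^ (N - 1)) ∂μ := by
            apply setLIntegral_mono' hmeas
            intro z hz
            apply ENNReal.ofReal_le_ofReal
            apply mul_le_mul_of_nonneg_left _ ht.le
            apply Real.rpow_le_rpow (by positivity) _ (by linarith)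
            refine hcr _ (dist_pos.2 fun h => hz.2 h.symm) ?_ ?_ t ht ht1
            · have := hR hz.1
              rwa [mem_closedBall, dist_comm] at this
            · intro hK
              have := hsub hK hz.1
              rwa [mem_ball, dist_comm] at this
        _ ≤ _ := lintegral_mono_set sdiff_subset
  refine ⟨?_, ?_⟩
  · intro s hs Ω hΩ hb hpos hfin hsub
    obtain ⟨a, ha, hf⟩ := key Ω hΩ hb hpos hfin hsub
    have := aux_tendsto _ a N s ha hs 1 one_pos ENNReal.one_lt_top hf
    simpa only [mul_one] using this
  · apply le_of_forall_gt_imp_ge_of_dense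
    intro s hs
    apply csInf_le ⟨0, fun y hy => hy.1.le⟩
    refine ⟨by linarith, ?_⟩
    obtain ⟨r, hr, hrK⟩ : ∃ r : ℝ, 0 < r ∧
        (0 < K → ball x r ⊆ ball x (Real.pi * Real.sqrt ((N - 1) / K))) := by
      by_cases hK : 0 < K
      · exact ⟨_, mul_pos Real.pi_pos (Real.sqrt_pos.2 (div_pos (by linarith) hK)),
          fun _ => subset_rfl⟩
      · exact ⟨1, one_pos, fun h => absurd h hK⟩
    obtain ⟨hp, hl⟩ := hball x r hr
    obtain ⟨a, ha, hf⟩ := key (ball x r) measurableSet_ball isBounded_ball hp hl hrK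
    have := aux_tendsto _ a N s ha hs _ hp hl hf
    refine top_unique (this.symm.le.trans ?_)
    exact le_iSup₂_of_le (ball x r) ⟨measurableSet_ball, isBounded_ball, hp, hl⟩ le_rfl
end

section
/- Let B ⊆ X be a Borel set and let κ be a real number with 0 < κ < dim_H(B), the Hausdorff dimension of B. Then there exists x ∈ B such that for every s with 0 < s < κ and every bounded measurable Ω ⊆ X with 0 < μ(Ω) < ∞, the quotient μ(Ω_t^x)/t^s tends to 0 as t → 0⁺, where Ω_t^x := {Φ^x(y,t) : y ∈ Ω \ C(x)}. In particular, the geodesic dimension 𝒩(x) := sup{s > 0 : every such limsup is 0} satisfies 𝒩(x) ≥ κ, and hence sup{𝒩(x) : x ∈ B} ≥ dim_H(B). -/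
open MeasureTheory Metric Filter Set

theorem geo_cover_aux {X : Type*} [MetricSpace X]
    [MeasurableSpace X] [BorelSpace X] (μ : Measure X)
    (hball : ∀ (y : X) (r : ℝ), 0 < r → 0 < μ (ball y r) ∧ μ (ball y r) < ⊤)
    (κ : ℝ) (hκ : 0 < κ) (D : Set X) (x0 : X) (M : ℝ) (hM : 0 < M) (hD : D ⊆ ball x0 M)
    (δ : ℝ) (hδ1 : δ ≤ 1)
    (h : ∀ x ∈ D, ∃ r : ℝ, 0 < r ∧ r < δ ∧ ENNReal.ofReal (r ^ κ) < μ (ball x r)) :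
    ∃ (u : Set X) (t : u → Set X), u.Countable ∧
      (∀ i, ediam (t i) ≤ ENNReal.ofReal (10 * δ)) ∧ D ⊆ ⋃ i, t i ∧
      ∑' i, ediam (t i) ^ κ ≤ ENNReal.ofReal (10 ^ κ) * μ (ball x0 (M + 1)) := by
  choose! r hr0 hrδ hrμ using h
  obtain ⟨u, huD, hdisj, hcov⟩ :=
    Vitali.exists_disjoint_subfamily_covering_enlargement_closedBall D (fun x => x) r δ
      (fun a ha => (hrδ a ha).le) 5 (by norm_num)
  have hdiam : ∀ i : u, ediam (closedBall (i : X) (5 * r i)) ≤ ENNReal.ofReal (10 * r i) := by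
    intro i
    refine ediam_le_of_forall_dist_le fun a ha b hb => ?_
    have := dist_triangle_right a b (i : X)
    rw [mem_closedBall] at ha hb
    linarith
  have hpd : Pairwise (Function.onFun Disjoint (fun i : u => closedBall (i : X) (r i))) :=
    fun i j hij => hdisj i.2 j.2 (fun e => hij (Subtype.ext e))
  have hsub : (⋃ i : u, closedBall (i : X) (r i)) ⊆ ball x0 (M + 1) := by
    refine iUnion_subset fun i y hy => ?_
    have h1 := hD (huD i.2)
    have h2 := hrδ i (huD i.2)
    rw [mem_closedBall] at hy
    rw [mem_ball] at h1 ⊢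
    have := dist_triangle y (i : X) x0
    linarith
  have hfin : μ (⋃ i : u, closedBall (i : X) (r i)) ≠ ⊤ :=
    ((measure_mono hsub).trans_lt (hball x0 (M + 1) (by linarith)).2).ne
  have hcount : u.Countable := by
    have := Measure.countable_meas_pos_of_disjoint_of_meas_iUnion_ne_top μ
      (As := fun i : u => closedBall (i : X) (r i)) (fun i => measurableSet_closedBall) hpd hfin
    have e : {i : u | 0 < μ (closedBall (i : X) (r i))} = univ := by
      refine eq_univ_of_forall fun i => ?_
      exact (hball i (r i) (hr0 i (huD i.2))).1.trans_le (measure_mono ball_subset_closedBall)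
    rw [e, countable_univ_iff] at this
    exact countable_coe_iff.mp this
  refine ⟨u, fun i => closedBall (i : X) (5 * r i), hcount, ?_, ?_, ?_⟩
  · intro i
    refine (hdiam i).trans (ENNReal.ofReal_le_ofReal ?_)
    have := hrδ i (huD i.2)
    linarith
  · intro x hx
    obtain ⟨b, hb, hb'⟩ := hcov x hx
    exact mem_iUnion.2 ⟨⟨b, hb⟩, hb' (mem_closedBall_self (hr0 x hx).le)⟩
  · calc ∑' i : u, ediam (closedBall (i : X) (5 * r i)) ^ κ
        ≤ ∑' i : u, ENNReal.ofReal (10 ^ κ) * μ (closedBall (i : X) (r i)) := by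
          refine ENNReal.tsum_le_tsum fun i => ?_
          have h0 := hr0 i (huD i.2)
          calc ediam (closedBall (i : X) (5 * r i)) ^ κ
              ≤ ENNReal.ofReal (10 * r i) ^ κ := ENNReal.rpow_le_rpow (hdiam i) hκ.le
            _ = ENNReal.ofReal (10 ^ κ) * ENNReal.ofReal ((r i) ^ κ) := by
              rw [ENNReal.ofReal_rpow_of_pos (by positivity),
                Real.mul_rpow (by norm_num) h0.le, ENNReal.ofReal_mul (by positivity)]
            _ ≤ _ := by
              gcongr
              exact (hrμ i (huD i.2)).le.trans (measure_mono ball_subset_closedBall)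
      _ = ENNReal.ofReal (10 ^ κ) * ∑' i : u, μ (closedBall (i : X) (r i)) := ENNReal.tsum_mul_left
      _ ≤ _ := by
        gcongr
        exact (tsum_meas_le_meas_iUnion_of_disjoint μ (fun i => measurableSet_closedBall) hpd).trans
          (measure_mono hsub)

theorem geo_point_aux {X : Type*} [MetricSpace X]
    [MeasurableSpace X] [BorelSpace X] (μ : Measure X)
    (hball : ∀ (y : X) (r : ℝ), 0 < r → 0 < μ (ball y r) ∧ μ (ball y r) < ⊤)
    (B : Set X) (κ : ℝ) (hκ : 0 < κ) (hκB : ENNReal.ofReal κ < dimH B) :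
    ∃ x ∈ B, ∃ δ : ℝ, 0 < δ ∧ ∀ r : ℝ, 0 < r → r < δ →
      μ (ball x r) ≤ ENNReal.ofReal (r ^ κ) := by
  by_contra! hcon
  rcases B.eq_empty_or_nonempty with rfl | ⟨x0, -⟩
  · simp at hκB
  have hBU : B = ⋃ n : ℕ, B ∩ ball x0 (n + 1) := by
    rw [← inter_iUnion, eq_comm, inter_eq_left]
    intro x _
    obtain ⟨n, hn⟩ := exists_nat_gt (dist x x0)
    exact mem_iUnion.2 ⟨n, by rw [mem_ball]; linarith⟩
  refine absurd hκB (not_lt.2 ?_)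
  rw [hBU, dimH_iUnion]
  refine iSup_le fun n => ?_
  have hmain : ∀ k : ℕ, _ := fun k : ℕ =>
    geo_cover_aux μ hball κ hκ (B ∩ ball x0 (n + 1)) x0 (n + 1) (by positivity)
      inter_subset_right (1 / ((k : ℝ) + 1))
      (by rw [div_le_one (by positivity)]; linarith [(Nat.cast_nonneg k : (0 : ℝ) ≤ k)])
      (fun x hx => hcon x hx.1 _ (by positivity))
  choose u t hu ht hst hsum using hmain
  haveI : ∀ k, Countable (u k) := fun k => countable_coe_iff.mpr (hu k)
  have hlim : Tendsto (fun k : ℕ => ENNReal.ofReal (10 * (1 / ((k : ℝ) + 1)))) atTop (nhds 0) := by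
    have := ENNReal.tendsto_ofReal
      ((tendsto_one_div_add_atTop_nhds_zero_nat (𝕜 := ℝ)).const_mul 10)
    simpa using this
  have hH := Measure.hausdorffMeasure_le_liminf_tsum κ (B ∩ ball x0 (n + 1)) _ hlim t
    (Eventually.of_forall ht) (Eventually.of_forall hst)
  have hfin : Measure.hausdorffMeasure κ (B ∩ ball x0 (n + 1)) ≠ ⊤ := by
    refine (hH.trans_lt (lt_of_le_of_lt (liminf_le_liminf (Eventually.of_forall hsum)) ?_)).ne
    rw [liminf_const]
    exact ENNReal.mul_lt_top ENNReal.ofReal_lt_top (hball _ _ (by positivity)).2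
  exact dimH_le_of_hausdorffMeasure_ne_top (d := κ.toNNReal)
    (by rwa [Real.coe_toNNReal _ hκ.le])



/-- Theorem 1.5 of the paper (main step): if `B` is a Borel subset of a metric
measure space with negligible cut loci and `0 < κ < dim_H B`, then there is a
point `x ∈ B` at which, for every `0 < s < κ` and every bounded measurable `Ω`
of positive finite measure, `μ(Ω_t^x)/t^s → 0` as `t → 0⁺`; in particular the
geodesic dimension at `x` is at least `κ`, whence
`sup {𝒩(x) : x ∈ B} ≥ dim_H B`. -/
theorem exists_point_geodesic_dimension_ge {X : Type*} [MetricSpace X]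
    [MeasurableSpace X] [BorelSpace X] (μ : Measure X)
    (hball : ∀ (y : X) (r : ℝ), 0 < r → 0 < μ (ball y r) ∧ μ (ball y r) < ⊤)
    (C : X → Set X) (hC : ∀ x, μ (C x) = 0) (Φ : X → X → ℝ → X)
    (hΦ : ∀ x, ∀ y ∉ C x, Φ x y 0 = x ∧ Φ x y 1 = y ∧
      ∀ s ∈ Icc (0 : ℝ) 1, ∀ t ∈ Icc (0 : ℝ) 1,
        dist (Φ x y s) (Φ x y t) = |s - t| * dist x y)
    (B : Set X) (hB : MeasurableSet B)
    (κ : ℝ) (hκ : 0 < κ) (hκB : ENNReal.ofReal κ < dimH B) :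
    ∃ x ∈ B, ∀ s : ℝ, 0 < s → s < κ →
      ∀ Ω : Set X, MeasurableSet Ω → Bornology.IsBounded Ω →
        0 < μ Ω → μ Ω < ⊤ →
        Filter.Tendsto
          (fun t : ℝ => μ ((fun y => Φ x y t) '' (Ω \ C x)) /
            ENNReal.ofReal (t ^ s))
          (nhdsWithin 0 (Ioi 0)) (nhds 0) := by
  obtain ⟨x, hxB, δ, hδ, hx⟩ := geo_point_aux μ hball B κ hκ hκB
  refine ⟨x, hxB, fun s hs hsκ Ω _ hΩ _ _ => ?_⟩
  obtain ⟨R0, hR0⟩ := hΩ.subset_ball x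
  set R := max R0 1 with hR
  have hRpos : 0 < R := lt_of_lt_of_le one_pos (le_max_right _ _)
  have hΩR : Ω ⊆ ball x R := hR0.trans (ball_subset_ball (le_max_left _ _))
  have hlim : Tendsto (fun t : ℝ => ENNReal.ofReal (R ^ κ * t ^ (κ - s)))
      (nhdsWithin 0 (Ioi 0)) (nhds 0) := by
    have h1 : Tendsto (fun t : ℝ => t ^ (κ - s)) (nhds 0) (nhds 0) := by
      have := (Real.continuousAt_rpow_const (0 : ℝ) (κ - s) (Or.inr (by linarith))).tendsto
      rwa [Real.zero_rpow (by linarith)] at this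
    have := ENNReal.tendsto_ofReal ((h1.mono_left nhdsWithin_le_nhds).const_mul (R ^ κ))
      (f := nhdsWithin 0 (Ioi 0))
    simpa using this
  refine tendsto_of_tendsto_of_tendsto_of_le_of_le' tendsto_const_nhds hlim
    (Eventually.of_forall fun _ => zero_le) ?_
  have hm : Ioo (0 : ℝ) (min 1 (δ / R)) ∈ nhdsWithin (0 : ℝ) (Ioi 0) :=
    Ioo_mem_nhdsGT (lt_min one_pos (div_pos hδ hRpos))
  filter_upwards [hm] with t ht
  obtain ⟨ht0, ht1⟩ := ht
  have htl : t < 1 := ht1.trans_le (min_le_left _ _)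
  have htδ : R * t < δ := by
    have := ht1.trans_le (min_le_right _ _)
    rw [lt_div_iff₀ hRpos] at this
    linarith
  have hsub : (fun y => Φ x y t) '' (Ω \ C x) ⊆ ball x (R * t) := by
    rintro _ ⟨y, ⟨hyΩ, hyC⟩, rfl⟩
    obtain ⟨h0, -, h⟩ := hΦ x y hyC
    have h2 := h t ⟨ht0.le, htl.le⟩ 0 ⟨le_rfl, zero_le_one⟩
    rw [h0, sub_zero, abs_of_pos ht0] at h2
    have h3 := hΩR hyΩ
    rw [mem_ball, dist_comm] at h3
    rw [mem_ball, h2, mul_comm]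
    gcongr
  refine ENNReal.div_le_of_le_mul ?_
  refine ((measure_mono hsub).trans (hx _ (by positivity) htδ)).trans (le_of_eq ?_)
  rw [← ENNReal.ofReal_mul (by positivity), Real.mul_rpow hRpos.le ht0.le, mul_assoc,
    ← Real.rpow_add ht0, sub_add_cancel]
end

section
/- Define Ĵ : ℝ^k × ℝ → ℝ by Ĵ(p, w) := (2^{2d}/(α²·w^{2d+2})) · Σ_{i=1}^d ‖pⁱ‖² · (∏_{j≠i} sin²(α_j·w/2)) · sin(α_i·w/2) · (sin(α_i·w/2) − (α_i·w/2)·cos(α_i·w/2)) for w ≠ 0 (with α := ∏ α_i), and Ĵ(p, 0) := (1/12)·Σ_{i=1}^d α_i²·‖pⁱ‖². Then for every ε > 0 there exists a nonempty bounded open set A ⊆ D such that for every t ∈ (0,1): ∫_{t·A} Ĵ dλ < t^{k+3−ε} · ∫_A Ĵ dλ, where t·A := {(t·p, t·w) : (p,w) ∈ A} and λ is the Lebesgue measure on ℝ^k × ℝ ≅ ℝ^{k+1}. (This is the construction showing that a corank-1 Carnot group of rank k does not satisfy MCP(0, k+3−ε).) -/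
open Finset MeasureTheory Pointwise

/-- The Jacobian determinant `Ĵ` of the exponential map of a corank-1 Carnot
group whose skew-symmetric matrix has nonzero singular values `α 0 ≤ … ≤ α (d-1)`. -/
noncomputable def Jhat (d k : ℕ) (α : Fin d → ℝ) (q : E d k) : ℝ :=
  if q.2.2 = 0 then
    (1 / 12) * ∑ i, α i ^ 2 * ((q.2.1 i).1 ^ 2 + (q.2.1 i).2 ^ 2)
  else
    2 ^ (2 * d) / ((∏ i, α i) ^ 2 * q.2.2 ^ (2 * d + 2)) *
      ∑ i, ((q.2.1 i).1 ^ 2 + (q.2.1 i).2 ^ 2) *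
        (∏ j ∈ univ.erase i, Real.sin (α j * q.2.2 / 2) ^ 2) *
        Real.sin (α i * q.2.2 / 2) *
        (Real.sin (α i * q.2.2 / 2) - α i * q.2.2 / 2 * Real.cos (α i * q.2.2 / 2))

theorem aux_mono_s11 (η x t : ℝ) (f f' : ℝ → ℝ) (ht0 : 0 < t) (ht1 : t < 1) (hx0 : 0 < x)
    (hf : ∀ y ∈ Set.Ioc 0 x, HasDerivAt f (f' y) y)
    (hpos : ∀ y ∈ Set.Ioc 0 x, 0 < η * f y + y * f' y) :
    t ^ η * f (t * x) < f x := by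
  have hd : ∀ y ∈ Set.Ioc 0 x, HasDerivAt (fun y => y ^ η * f y)
      (η * y ^ (η - 1) * f y + y ^ η * f' y) y := by
    intro y hy
    exact (Real.hasDerivAt_rpow_const (Or.inl hy.1.ne')).mul (hf y hy)
  have hxt : t * x < x := by nlinarith
  have htx : 0 < t * x := by positivity
  have hm : StrictMonoOn (fun y => y ^ η * f y) (Set.Icc (t * x) x) := by
    apply strictMonoOn_of_deriv_pos (convex_Icc _ _)
    · intro y hy
      exact (hd y ⟨lt_of_lt_of_le htx hy.1, hy.2⟩).continuousAt.continuousWithinAt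
    · intro y hy
      rw [interior_Icc] at hy
      have hy0 : 0 < y := lt_trans htx hy.1
      have hy' : y ∈ Set.Ioc 0 x := ⟨hy0, hy.2.le⟩
      rw [(hd y hy').deriv]
      have : η * y ^ (η - 1) * f y + y ^ η * f' y = y ^ (η - 1) * (η * f y + y * f' y) := by
        have : y ^ η = y ^ (η - 1) * y := by
          rw [Real.rpow_sub_one hy0.ne']; field_simp
        rw [this]; ring
      rw [this]
      exact mul_pos (Real.rpow_pos_of_pos hy0 _) (hpos y hy')
  have h := hm ⟨le_rfl, hxt.le⟩ ⟨hxt.le, le_rfl⟩ hxt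
  simp only at h
  rw [Real.mul_rpow ht0.le hx0.le] at h
  have hxp : 0 < x ^ η := Real.rpow_pos_of_pos hx0 _
  have : x ^ η * (t ^ η * f (t * x)) < x ^ η * f x := by linarith
  exact lt_of_mul_lt_mul_left this hxp.le

noncomputable def auxS (x : ℝ) : ℝ := Real.sin x / x
noncomputable def auxT (x : ℝ) : ℝ := (Real.sin x - x * Real.cos x) / x ^ 3

theorem aux_le (x : ℝ) (hx : 0 ≤ x) : Real.sin x - x * Real.cos x ≤ x ^ 3 / 3 := by
  have hm : MonotoneOn (fun y : ℝ => y ^ 3 / 3 - (Real.sin y - y * Real.cos y)) (Set.Ici 0) := by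
    have hd : ∀ y : ℝ, HasDerivAt (fun y : ℝ => y ^ 3 / 3 - (Real.sin y - y * Real.cos y))
        (y ^ 2 - y * Real.sin y) y := by
      intro y
      have h := ((hasDerivAt_pow 3 y).div_const 3).sub ((Real.hasDerivAt_sin y).sub
        ((hasDerivAt_id y).mul (Real.hasDerivAt_cos y)))
      refine h.congr_deriv ?_
      simp
    apply monotoneOn_of_deriv_nonneg (convex_Ici 0)
    · exact fun y _ => (hd y).continuousAt.continuousWithinAt
    · exact fun y _ => (hd y).differentiableAt.differentiableWithinAt
    · intro y hy
      rw [interior_Ici] at hy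
      rw [(hd y).deriv]
      have := Real.sin_le (le_of_lt hy)
      nlinarith [hy.out]
  have := hm (Set.mem_Ici.2 le_rfl) (Set.mem_Ici.2 hx) hx
  simp at this
  linarith

theorem aux_pos_s11 (x : ℝ) (hx : 0 < x) (h1 : x ≤ 1) : 0 < Real.sin x - x * Real.cos x := by
  have := Real.lt_tan hx (by linarith [Real.pi_gt_three])
  have hc : 0 < Real.cos x := Real.cos_pos_of_mem_Ioo ⟨by linarith [Real.pi_gt_three], by linarith [Real.pi_gt_three]⟩
  rw [Real.tan_eq_sin_div_cos, lt_div_iff₀ hc] at this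
  linarith

theorem auxS_pos (x : ℝ) (hx : 0 < x) (h1 : x ≤ 1) : 0 < auxS x :=
  div_pos (Real.sin_pos_of_pos_of_le_one hx h1) hx
theorem auxT_pos (x : ℝ) (hx : 0 < x) (h1 : x ≤ 1) : 0 < auxT x :=
  div_pos (aux_pos_s11 x hx h1) (by positivity)
theorem auxS_le (x : ℝ) (hx : 0 < x) : auxS x ≤ 1 := by
  unfold auxS; rw [div_le_one hx]; exact Real.sin_le hx.le
theorem auxT_le (x : ℝ) (hx : 0 < x) : auxT x ≤ 1 := by
  unfold auxT; rw [div_le_one (by positivity)]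
  have := aux_le x hx.le
  have : 0 < x ^ 3 := by positivity
  linarith

theorem auxS_mono (η x t : ℝ) (hη : 0 < η) (hη1 : η ≤ 1) (ht0 : 0 < t) (ht1 : t < 1) (hx0 : 0 < x)
    (hx : x < η) : t ^ η * auxS (t * x) < auxS x := by
  apply aux_mono_s11 η x t auxS (fun y => (Real.cos y * y - Real.sin y * 1) / y ^ 2) ht0 ht1 hx0
  · intro y hy
    exact (Real.hasDerivAt_sin y).div (hasDerivAt_id y) hy.1.ne'
  · intro y hy
    have hy0 := hy.1
    have : η * auxS y + y * ((Real.cos y * y - Real.sin y * 1) / y ^ 2) =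
      (y * Real.cos y - (1 - η) * Real.sin y) / y := by
      unfold auxS; field_simp; ring
    rw [this]
    apply div_pos _ hy0
    have h1 := Real.sin_le hy0.le
    have h2 := Real.one_sub_sq_div_two_le_cos (x := y)
    have h3 : (1 - η) * Real.sin y ≤ (1 - η) * y := mul_le_mul_of_nonneg_left h1 (by linarith)
    have h4 : y * (1 - y ^ 2 / 2) ≤ y * Real.cos y := mul_le_mul_of_nonneg_left h2 hy0.le
    have h5 : y ^ 2 < η := by nlinarith [hy.2]
    nlinarith

theorem auxT_mono (η x t : ℝ) (hη : 0 < η) (hη1 : η ≤ 1) (ht0 : 0 < t) (ht1 : t < 1) (hx0 : 0 < x)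
    (hx : x < η) : t ^ η * auxT (t * x) < auxT x := by
  apply aux_mono_s11 η x t auxT (fun y => ((y * Real.sin y) * y ^ 3 -
    (Real.sin y - y * Real.cos y) * (3 * y ^ 2)) / (y ^ 3) ^ 2) ht0 ht1 hx0
  · intro y hy
    have hy0 := hy.1
    have h := ((Real.hasDerivAt_sin y).sub
        ((hasDerivAt_id y).mul (Real.hasDerivAt_cos y))).div (hasDerivAt_pow 3 y) (by positivity)
    refine h.congr_deriv ?_
    simp
  · intro y hy
    have hy0 := hy.1
    have : η * auxT y + y * (((y * Real.sin y) * y ^ 3 -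
      (Real.sin y - y * Real.cos y) * (3 * y ^ 2)) / (y ^ 3) ^ 2) =
      (y ^ 2 * Real.sin y - (3 - η) * (Real.sin y - y * Real.cos y)) / y ^ 3 := by
      unfold auxT; field_simp; ring
    rw [this]
    apply div_pos _ (by positivity)
    have h1 := aux_le y hy0.le
    have h2 := Real.sin_gt_sub_cube hy0
    have h3 : (3 - η) * (Real.sin y - y * Real.cos y) ≤ (3 - η) * (y ^ 3 / 3) :=
      mul_le_mul_of_nonneg_left h1 (by linarith)
    have h4 : y ^ 2 * (y - y ^ 3 / 4) < y ^ 2 * Real.sin y := by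
      apply mul_lt_mul_of_pos_left _ (by positivity)
      have : 0 < y ^ 3 := by positivity
      linarith
    have h5 : y ^ 2 < η := by nlinarith [hy.2]
    have h6 : 0 < y ^ 3 := by positivity
    nlinarith [mul_lt_mul_of_pos_left h5 h6]

noncomputable def auxF (d : ℕ) (α : Fin d → ℝ) (w : ℝ) (i : Fin d) : ℝ :=
  (∏ j ∈ univ.erase i, auxS (α j * w / 2) ^ 2) * auxS (α i * w / 2) * auxT (α i * w / 2) *
    (α i ^ 2 / 4)

theorem Jhat_eq (d k : ℕ) (α : Fin d → ℝ) (hα : ∀ i, 0 < α i) (q : E d k) (hw : 0 < q.2.2) :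
    Jhat d k α q = ∑ i, ((q.2.1 i).1 ^ 2 + (q.2.1 i).2 ^ 2) * auxF d α q.2.2 i := by
  unfold Jhat
  rw [if_neg hw.ne', Finset.mul_sum]
  refine Finset.sum_congr rfl fun i _ => ?_
  set w := q.2.2
  have hi := hα i
  have key : ∏ j ∈ univ.erase i, Real.sin (α j * w / 2) ^ 2 =
      (∏ j ∈ univ.erase i, auxS (α j * w / 2) ^ 2) * ((∏ j ∈ univ.erase i, α j) ^ 2
        * (w ^ 2 / 4) ^ (d - 1)) := by
    have hc : (univ.erase i).card = d - 1 := by simp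
    rw [← hc, ← Finset.prod_const, ← Finset.prod_pow, ← Finset.prod_mul_distrib,
      ← Finset.prod_mul_distrib]
    refine Finset.prod_congr rfl fun j _ => ?_
    have hj := hα j
    unfold auxS
    field_simp
    ring
  have hP : ∏ j, α j = α i * ∏ j ∈ univ.erase i, α j := (Finset.mul_prod_erase _ _ (mem_univ i)).symm
  have hQ : 0 < ∏ j ∈ univ.erase i, α j := Finset.prod_pos fun j _ => hα j
  rw [key, hP]
  obtain ⟨e, rfl⟩ : ∃ e, d = e + 1 := ⟨d - 1, by have := i.pos; omega⟩
  have h4 : (2 : ℝ) ^ (2 * (e + 1)) = 4 ^ e * 4 := by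
    rw [pow_mul]; norm_num [pow_succ]
  have hw4 : w ^ (2 * (e + 1) + 2) = (w ^ 2) ^ e * w ^ 4 := by
    rw [← pow_mul, ← pow_add]; congr 1
  rw [h4, hw4, Nat.add_sub_cancel, div_pow]
  unfold auxF
  generalize ∏ j ∈ univ.erase i, auxS (α j * w / 2) ^ 2 = R
  unfold auxS auxT
  field_simp
  ring

theorem auxF_pos (d : ℕ) (α : Fin d → ℝ) (w : ℝ) (i : Fin d)
    (h : ∀ j, 0 < α j * w / 2 ∧ α j * w / 2 ≤ 1) (hα : ∀ i, 0 < α i) : 0 < auxF d α w i := by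
  have hi := hα i
  have h1 := auxS_pos _ (h i).1 (h i).2
  have h2 := auxT_pos _ (h i).1 (h i).2
  have h3 : 0 < ∏ j ∈ univ.erase i, auxS (α j * w / 2) ^ 2 :=
    Finset.prod_pos fun j _ => pow_pos (auxS_pos _ (h j).1 (h j).2) 2
  unfold auxF
  exact mul_pos (mul_pos (mul_pos h3 h1) h2) (by positivity)

theorem auxF_le (d : ℕ) (α : Fin d → ℝ) (w : ℝ) (i : Fin d)
    (h : ∀ j, 0 < α j * w / 2 ∧ α j * w / 2 ≤ 1) : auxF d α w i ≤ α i ^ 2 / 4 := by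
  have h1 := auxS_pos _ (h i).1 (h i).2
  have h2 := auxT_pos _ (h i).1 (h i).2
  have h1' := auxS_le _ (h i).1
  have h2' := auxT_le _ (h i).1
  have h3 : 0 ≤ ∏ j ∈ univ.erase i, auxS (α j * w / 2) ^ 2 :=
    Finset.prod_nonneg fun j _ => sq_nonneg _
  have h3' : ∏ j ∈ univ.erase i, auxS (α j * w / 2) ^ 2 ≤ 1 :=
    Finset.prod_le_one (fun j _ => sq_nonneg _) fun j _ =>
      pow_le_one₀ (auxS_pos _ (h j).1 (h j).2).le (auxS_le _ (h j).1)
  unfold auxF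
  have h4 := mul_le_one₀ h3' h1.le h1'
  have h5 := mul_le_one₀ h4 h2.le h2'
  exact mul_le_of_le_one_left (by positivity) h5

theorem auxF_mono (d : ℕ) (α : Fin d → ℝ) (hα : ∀ i, 0 < α i) (w η t : ℝ) (i : Fin d)
    (hη : 0 < η) (hη1 : η ≤ 1) (ht0 : 0 < t) (ht1 : t < 1)
    (h : ∀ j, 0 < α j * w / 2 ∧ α j * w / 2 < η) :
    (t ^ η) ^ (2 * d) * auxF d α (t * w) i < auxF d α w i := by
  have e : ∀ j, α j * (t * w) / 2 = t * (α j * w / 2) := fun j => by ring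
  have hp : ∀ j, 0 < auxS (t * (α j * w / 2)) := fun j =>
    auxS_pos _ (mul_pos ht0 (h j).1) (by nlinarith [(h j).1, (h j).2])
  have hs : 0 < t ^ η := Real.rpow_pos_of_pos ht0 _
  have hS := fun j => auxS_mono η (α j * w / 2) t hη hη1 ht0 ht1 (h j).1 (h j).2
  have hT := auxT_mono η (α i * w / 2) t hη hη1 ht0 ht1 (h i).1 (h i).2
  have hTp : 0 < auxT (t * (α i * w / 2)) :=
    auxT_pos _ (mul_pos ht0 (h i).1) (by nlinarith [(h i).1, (h i).2])
  have hP : ∏ j ∈ univ.erase i, (t ^ η * auxS (t * (α j * w / 2))) ^ 2 ≤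
      ∏ j ∈ univ.erase i, auxS (α j * w / 2) ^ 2 :=
    Finset.prod_le_prod (fun j _ => sq_nonneg _) fun j _ =>
      pow_le_pow_left₀ (mul_pos hs (hp j)).le (hS j).le 2
  have hP0 : 0 < ∏ j ∈ univ.erase i, (t ^ η * auxS (t * (α j * w / 2))) ^ 2 :=
    Finset.prod_pos fun j _ => pow_pos (mul_pos hs (hp j)) 2
  have hPe : ∏ j ∈ univ.erase i, (t ^ η * auxS (t * (α j * w / 2))) ^ 2 =
      (t ^ η) ^ (2 * (d - 1)) * ∏ j ∈ univ.erase i, auxS (t * (α j * w / 2)) ^ 2 := by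
    have hc : (univ.erase i).card = d - 1 := by simp
    simp_rw [mul_pow]
    rw [Finset.prod_mul_distrib, Finset.prod_const, hc, ← pow_mul]
  have hd : (t ^ η) ^ (2 * d) = (t ^ η) ^ (2 * (d - 1)) * t ^ η * t ^ η := by
    rw [← pow_succ, ← pow_succ]; congr 1; have := i.pos; omega
  unfold auxF
  simp_rw [e]
  have hi := hα i
  have h1 := mul_lt_mul'' (mul_lt_mul_of_le_of_lt_of_pos_of_nonneg hP (hS i) hP0
    (by exact ((mul_pos hs (hp i)).trans (hS i)).le)) hT (mul_pos hP0 (mul_pos hs (hp i))).le (mul_pos hs hTp).le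
  have h2 := mul_lt_mul_of_pos_right h1 (show 0 < α i ^ 2 / 4 by positivity)
  refine lt_of_eq_of_lt ?_ h2
  rw [hPe, hd]
  ring

theorem Jhat_integral_scaling_sharp (d k : ℕ) (hd : 1 ≤ d) (hk : 2 * d ≤ k)
    (α : Fin d → ℝ) (hα : ∀ i, 0 < α i) (hmono : Monotone α)
    (ε : ℝ) (hε : 0 < ε) :
    ∃ A : Set (E d k), A.Nonempty ∧ IsOpen A ∧ Bornology.IsBounded A ∧
      A ⊆ {q : E d k |
        |q.2.2| < 2 * Real.pi / α ⟨d - 1, Nat.sub_lt hd one_pos⟩ ∧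
        ∃ i, q.2.1 i ≠ 0} ∧
      ∀ t ∈ Set.Ioo (0 : ℝ) 1,
        ∫⁻ q in t • A, ENNReal.ofReal (Jhat d k α q) <
          ENNReal.ofReal (t ^ ((k : ℝ) + 3 - ε)) *
            ∫⁻ q in A, ENNReal.ofReal (Jhat d k α q) := by
  set a := α ⟨d - 1, Nat.sub_lt hd one_pos⟩ with ha
  have ha0 : 0 < a := hα _
  have hle : ∀ i, α i ≤ a := fun i => hmono (by
    rw [Fin.le_def]; have := i.2; simp only; omega)
  have hd0 : (0 : ℝ) < d := by exact_mod_cast hd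
  obtain ⟨η, hη, hη1, hηε⟩ : ∃ η : ℝ, 0 < η ∧ η ≤ 1 ∧ η * (2 * d) ≤ ε := by
    refine ⟨min 1 (ε / (2 * d)), by positivity, min_le_left _ _, ?_⟩
    rw [← le_div_iff₀ (by positivity)]; exact min_le_right _ _
  set δ := η / a with hδ
  have hδ0 : 0 < δ := by positivity
  have hx : ∀ w ∈ Set.Ioo 0 δ, ∀ j, 0 < α j * w / 2 ∧ α j * w / 2 < η := by
    intro w hw j
    have hj := hα j
    have hw0 := hw.1
    refine ⟨by positivity, ?_⟩
    have h1 : w * a < η := (lt_div_iff₀ ha0).1 hw.2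
    have h2 : α j * w ≤ a * w := mul_le_mul_of_nonneg_right (hle j) hw0.le
    linarith
  let A : Set (E d k) := Metric.ball 0 1 ×ˢ (Metric.ball (fun _ => ((2 : ℝ), (2 : ℝ))) 1 ×ˢ Set.Ioo 0 δ)
  have hAo : IsOpen A := Metric.isOpen_ball.prod (Metric.isOpen_ball.prod isOpen_Ioo)
  have hAb : Bornology.IsBounded A :=
    Metric.isBounded_ball.prod (Metric.isBounded_ball.prod (Metric.isBounded_Ioo _ _))
  have hAn : A.Nonempty := (Metric.nonempty_ball.2 one_pos).prod
    ((Metric.nonempty_ball.2 one_pos).prod (Set.nonempty_Ioo.2 hδ0))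
  have hp : ∀ q ∈ A, ∀ i, 1 < (q.2.1 i).1 ∧ (q.2.1 i).1 < 3 ∧ 1 < (q.2.1 i).2 ∧ (q.2.1 i).2 < 3 := by
    intro q hq i
    have h := (Metric.mem_ball.1 hq.2.1)
    have h1 := (dist_le_pi_dist q.2.1 _ i).trans_lt h
    rw [Prod.dist_eq, max_lt_iff, Real.dist_eq, Real.dist_eq, abs_lt, abs_lt] at h1
    simp only at h1
    obtain ⟨⟨_, _⟩, _, _⟩ := h1
    refine ⟨?_, ?_, ?_, ?_⟩ <;> linarith
  have hw : ∀ q ∈ A, q.2.2 ∈ Set.Ioo 0 δ := fun q hq => hq.2.2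
  have hmeas : Measurable (Jhat d k α) := by
    unfold Jhat
    refine Measurable.ite (measurableSet_eq_fun (by fun_prop) (by fun_prop)) ?_ ?_ <;> fun_prop
  refine ⟨A, hAn, hAo, hAb, ?_, ?_⟩
  · intro q hq
    have h2 := hw q hq
    refine ⟨?_, ⟨⟨0, hd⟩, fun h => ?_⟩⟩
    · rw [abs_of_pos h2.1]
      refine h2.2.trans ?_
      apply div_lt_div_of_pos_right _ ha0
      linarith [Real.pi_gt_three]
    · have := (hp q hq ⟨0, hd⟩).1
      rw [h] at this
      simp at this
      linarith
  · intro t ht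
    obtain ⟨ht0, ht1⟩ := ht
    have hrank : Module.finrank ℝ (E d k) = k + 1 := by
      have : Module.finrank ℝ (Fin d → ℝ × ℝ) = d * 2 := by
        rw [Module.finrank_pi_fintype]; simp
      simp [E, this]; omega
    have i1 : (volume : Measure (ℝ × ℝ)).IsAddHaarMeasure :=
      inferInstanceAs ((volume : Measure ℝ).prod (volume : Measure ℝ)).IsAddHaarMeasure
    have i2 : (volume : Measure (Fin d → ℝ × ℝ)).IsAddHaarMeasure :=
      inferInstanceAs (Measure.pi fun _ : Fin d => (volume : Measure (ℝ × ℝ))).IsAddHaarMeasure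
    have i3 : (volume : Measure ((Fin d → ℝ × ℝ) × ℝ)).IsAddHaarMeasure :=
      Measure.prod.instIsAddHaarMeasure (volume : Measure (Fin d → ℝ × ℝ)) (volume : Measure ℝ)
    have i4 : (volume : Measure (E d k)).IsAddHaarMeasure :=
      Measure.prod.instIsAddHaarMeasure (volume : Measure (Fin (k - 2 * d) → ℝ))
        (volume : Measure ((Fin d → ℝ × ℝ) × ℝ))
    have hmeas2 : Measurable fun q : E d k => ENNReal.ofReal (Jhat d k α (t • q)) :=
      (hmeas.comp (measurable_const_smul t)).ennreal_ofReal
    have hcv : ∫⁻ q in t • A, ENNReal.ofReal (Jhat d k α q) =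
        ENNReal.ofReal (t ^ (k + 1)) * ∫⁻ q in A, ENNReal.ofReal (Jhat d k α (t • q)) := by
      have h := lintegral_image_eq_lintegral_abs_det_fderiv_mul (volume : Measure (E d k))
        (f := fun q => t • q) (f' := fun _ => t • ContinuousLinearMap.id ℝ (E d k))
        hAo.measurableSet
        (fun q _ => ((hasFDerivAt_id q).const_smul t).hasFDerivWithinAt)
        (fun q _ q' _ h => smul_right_injective _ ht0.ne' h)
        (fun q => ENNReal.ofReal (Jhat d k α q))
      rw [Set.image_smul] at h
      rw [h, ← lintegral_const_mul]
      · have hdet : (t • ContinuousLinearMap.id ℝ (E d k)).det = t ^ (k + 1) := by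
          rw [ContinuousLinearMap.det]
          simp only [ContinuousLinearMap.toLinearMap_smul, LinearMap.det_smul, hrank]
          simp
        rw [hdet, abs_of_pos (by positivity)]
      · exact (hmeas.comp (measurable_const_smul t)).ennreal_ofReal
    have hpt : ∀ q ∈ A, t ^ (k + 1) * Jhat d k α (t • q) < t ^ ((k : ℝ) + 3 - ε) * Jhat d k α q := by
      intro q hq
      have h2 := hw q hq
      rw [Jhat_eq d k α hα q h2.1, Jhat_eq d k α hα (t • q) (by
        have := h2.1; simp only [Prod.smul_snd, smul_eq_mul]; positivity),
        Finset.mul_sum, Finset.mul_sum]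
      refine Finset.sum_lt_sum_of_nonempty ⟨⟨0, hd⟩, mem_univ _⟩ fun i _ => ?_
      obtain ⟨h3, _, h4, _⟩ := hp q hq i
      simp only [Prod.smul_snd, Prod.smul_fst, Pi.smul_apply, smul_eq_mul]
      have hF := auxF_mono d α hα q.2.2 η t i hη hη1 ht0 ht1 (hx _ h2)
      have hxt : ∀ j, 0 < α j * (t * q.2.2) / 2 ∧ α j * (t * q.2.2) / 2 ≤ 1 := by
        intro j
        obtain ⟨h5, h6⟩ := hx _ h2 j
        have e : α j * (t * q.2.2) / 2 = t * (α j * q.2.2 / 2) := by ring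
        rw [e]
        exact ⟨mul_pos ht0 h5, by nlinarith⟩
      have hF0 := auxF_pos d α (t * q.2.2) i hxt hα
      have hte : t ^ ε ≤ (t ^ η) ^ (2 * d) := by
        rw [← Real.rpow_natCast, ← Real.rpow_mul ht0.le]
        apply Real.rpow_le_rpow_of_exponent_ge ht0 ht1.le
        push_cast; exact hηε
      have hF2 : t ^ ε * auxF d α (t * q.2.2) i < auxF d α q.2.2 i :=
        (mul_le_mul_of_nonneg_right hte hF0.le).trans_lt hF
      have hsplit : t ^ (k + 1) * t ^ 2 = t ^ ((k : ℝ) + 3 - ε) * t ^ ε := by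
        rw [← Real.rpow_add ht0, ← pow_add, ← Real.rpow_natCast]
        congr 1; push_cast; ring
      have hc : 0 < t ^ ((k : ℝ) + 3 - ε) * ((q.2.1 i).1 ^ 2 + (q.2.1 i).2 ^ 2) := by
        have := Real.rpow_pos_of_pos ht0 ((k : ℝ) + 3 - ε)
        positivity
      have := mul_lt_mul_of_pos_left hF2 hc
      calc _ = (t ^ (k + 1) * t ^ 2) * (((q.2.1 i).1 ^ 2 + (q.2.1 i).2 ^ 2) * auxF d α (t * q.2.2) i) := by ring
        _ < _ := by rw [hsplit]; linarith
    have hJ0 : ∀ q ∈ A, 0 < Jhat d k α q := by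
      intro q hq
      rw [Jhat_eq d k α hα q (hw q hq).1]
      refine Finset.sum_pos (fun i _ => ?_) ⟨⟨0, hd⟩, mem_univ _⟩
      obtain ⟨h3, _, h4, _⟩ := hp q hq i
      have := auxF_pos d α q.2.2 i (fun j => ⟨(hx _ (hw q hq) j).1, ((hx _ (hw q hq) j).2.trans_le hη1).le⟩) hα
      positivity
    have hJb : ∀ q ∈ A, Jhat d k α q ≤ ∑ i, 18 * (α i ^ 2 / 4) := by
      intro q hq
      rw [Jhat_eq d k α hα q (hw q hq).1]
      refine Finset.sum_le_sum fun i _ => ?_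
      obtain ⟨h3, h3', h4, h4'⟩ := hp q hq i
      have hy : ∀ j, 0 < α j * q.2.2 / 2 ∧ α j * q.2.2 / 2 ≤ 1 :=
        (fun j => ⟨(hx _ (hw q hq) j).1, ((hx _ (hw q hq) j).2.trans_le hη1).le⟩)
      exact mul_le_mul (by nlinarith) (auxF_le d α _ i hy) (auxF_pos d α q.2.2 i hy hα).le (by norm_num)
    have hr : 0 < t ^ ((k : ℝ) + 3 - ε) := Real.rpow_pos_of_pos ht0 _
    have hfin : ∫⁻ q in A, ENNReal.ofReal (Jhat d k α q) ≠ ⊤ := by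
      refine ne_top_of_le_ne_top ?_ (setLIntegral_mono measurable_const
        fun q hq => ENNReal.ofReal_le_ofReal (hJb q hq))
      rw [setLIntegral_const]
      exact ENNReal.mul_ne_top ENNReal.ofReal_ne_top hAb.measure_lt_top.ne
    rw [hcv, ← lintegral_const_mul _ hmeas2,
      ← lintegral_const_mul _ hmeas.ennreal_ofReal]
    have hlt : ∀ q ∈ A, ENNReal.ofReal (t ^ (k + 1)) * ENNReal.ofReal (Jhat d k α (t • q)) <
        ENNReal.ofReal (t ^ ((k : ℝ) + 3 - ε)) * ENNReal.ofReal (Jhat d k α q) := by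
      intro q hq
      rw [← ENNReal.ofReal_mul (by positivity), ← ENNReal.ofReal_mul hr.le]
      exact (ENNReal.ofReal_lt_ofReal_iff (mul_pos hr (hJ0 q hq))).2 (hpt q hq)
    refine setLIntegral_strict_mono hAo.measurableSet (hAo.measure_pos volume hAn).ne'
      (measurable_const.mul hmeas.ennreal_ofReal) ?_ (ae_of_all _ hlt)
    refine ne_top_of_le_ne_top ?_ (setLIntegral_mono (measurable_const.mul hmeas.ennreal_ofReal)
        fun q hq => (hlt q hq).le)
    change ∫⁻ q in A, ENNReal.ofReal (t ^ ((k : ℝ) + 3 - ε)) * ENNReal.ofReal (Jhat d k α q) ≠ ⊤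
    rw [lintegral_const_mul _ hmeas.ennreal_ofReal]
    exact ENNReal.mul_ne_top ENNReal.ofReal_ne_top hfin
end

section
/- Let n, k, s, m be natural numbers with 1 ≤ k < n, s ≥ 2 and m ≥ s. Let d : {0, 1, …, s} → ℕ be nondecreasing with d(0) = 0, d(1) = k, d(s) = n, and let κ : {0, 1, …, m} → ℕ be nondecreasing with κ(0) = 0, κ(1) = k, κ(m) = n, and κ(i) ≤ d(min(i, s)) for all 0 ≤ i ≤ m. Then Σ_{i=1}^m (2i−1)·(κ(i) − κ(i−1)) > Σ_{i=1}^s i·(d(i) − d(i−1)) > n. -/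
open Finset

theorem aux_abel (f : ℕ → ℕ) (h0 : f 0 = 0) (p : ℕ)
    (hf : ∀ i j, i ≤ j → j ≤ p → f i ≤ f j) :
    ∑ i ∈ Icc 1 p, i * (f i - f (i - 1)) + ∑ i ∈ range p, f i = p * f p := by
  induction p with
  | zero => simp
  | succ q ih =>
    have h := ih (fun i j hij hj => hf i j hij (by omega))
    rw [Finset.sum_Icc_succ_top (by omega), Finset.sum_range_succ]
    obtain ⟨c, hc⟩ := Nat.exists_eq_add_of_le (hf q (q+1) (by omega) le_rfl)
    simp only [Nat.add_sub_cancel, hc, Nat.add_sub_cancel_left]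
    nlinarith

theorem aux_odd (f : ℕ → ℕ) (h0 : f 0 = 0) (p : ℕ)
    (hf : ∀ i j, i ≤ j → j ≤ p → f i ≤ f j) :
    ∑ i ∈ Icc 1 p, (2 * i - 1) * (f i - f (i - 1)) + f p
      = 2 * ∑ i ∈ Icc 1 p, i * (f i - f (i - 1)) := by
  induction p with
  | zero => simp [h0]
  | succ q ih =>
    have h := ih (fun i j hij hj => hf i j hij (by omega))
    rw [Finset.sum_Icc_succ_top (by omega), Finset.sum_Icc_succ_top (by omega)]
    obtain ⟨c, hc⟩ := Nat.exists_eq_add_of_le (hf q (q+1) (by omega) le_rfl)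
    have e : 2 * (q + 1) - 1 = 2 * q + 1 := by omega
    simp only [Nat.add_sub_cancel, hc, Nat.add_sub_cancel_left, e]
    nlinarith

/-- The combinatorial core of Theorem 1.6 of the paper: if `d i = dim 𝒟ⁱ` are
the dimensions of the flag of the distribution of an equiregular, genuinely
sub-Riemannian structure (`k < n`, step `s ≥ 2`) and `κ i = dim ℱⁱ` are the
dimensions of the flag of a generic (ample) geodesic, then the geodesic
dimension `Σ (2i−1)(κ i − κ (i−1))` is strictly larger than the Hausdorff
dimension `Σ i (d i − d (i−1))`, which in turn is strictly larger than the
topological dimension `n`. -/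
theorem geodesic_dim_gt_hausdorff_dim_gt_top_dim (n k s m : ℕ)
    (hk1 : 1 ≤ k) (hkn : k < n) (hs : 2 ≤ s) (hm : s ≤ m)
    (d κ : ℕ → ℕ)
    (hdmono : ∀ i j, i ≤ j → j ≤ s → d i ≤ d j)
    (hd0 : d 0 = 0) (hd1 : d 1 = k) (hds : d s = n)
    (hκmono : ∀ i j, i ≤ j → j ≤ m → κ i ≤ κ j)
    (hκ0 : κ 0 = 0) (hκ1 : κ 1 = k) (hκm : κ m = n)
    (hκd : ∀ i, i ≤ m → κ i ≤ d (min i s)) :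
    (∑ i ∈ Icc 1 m, (2 * i - 1) * (κ i - κ (i - 1)) >
      ∑ i ∈ Icc 1 s, i * (d i - d (i - 1))) ∧
    ∑ i ∈ Icc 1 s, i * (d i - d (i - 1)) > n := by
  have hD := aux_abel d hd0 s hdmono
  have hK := aux_abel κ hκ0 m hκmono
  have hO := aux_odd κ hκ0 m hκmono
  have h1 : ∀ p, 2 ≤ p → p ≤ s → ∑ i ∈ range p, d i + n < p * n := by
    intro p hp
    induction p, hp using Nat.le_induction with
    | base => intro _; simp [Finset.sum_range_succ, hd0, hd1]; omega
    | succ q hq ih =>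
      intro hqs
      have := ih (by omega)
      have h2 := hdmono q s (by omega) le_rfl
      rw [Finset.sum_range_succ]
      nlinarith
  have h2 : ∀ t, s + t ≤ m → ∑ i ∈ range (s + t), κ i ≤ ∑ i ∈ range s, d i + t * n := by
    intro t
    induction t with
    | zero =>
      intro _
      simp only [Nat.add_zero, Nat.zero_mul]
      apply Finset.sum_le_sum
      intro i hi
      have hi := Finset.mem_range.1 hi
      have := hκd i (by omega)
      rwa [min_eq_left hi.le] at this
    | succ t ih =>
      intro ht
      have := ih (by omega)
      have h3 := hκmono (s + t) m (by omega) le_rfl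
      rw [← Nat.add_assoc, Finset.sum_range_succ]
      nlinarith
  have h1 := h1 s hs le_rfl
  obtain ⟨t, rfl⟩ := Nat.exists_eq_add_of_le hm
  have h2 := h2 t le_rfl
  rw [hds] at hD
  rw [hκm] at hK hO
  rw [Nat.add_mul] at hK
  constructor <;> omega
end

section
/- Let n, k, s, m be natural numbers with 1 ≤ k < n, s ≥ 3 and m ≥ s. Let d : {0, 1, …, s} → ℕ be strictly increasing with d(0) = 0, d(1) = k, d(s) = n, and let κ : {0, 1, …, m} → ℕ be nondecreasing with κ(0) = 0, κ(1) = k, κ(m) = n, and κ(i) ≤ d(min(i, s)) for all 0 ≤ i ≤ m. Then Σ_{i=1}^m (2i−1)·(κ(i) − κ(i−1)) > Σ_{i=1}^s i·(d(i) − d(i−1)) + (n − k). -/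
open Finset

/-- The combinatorial core of the last part of Theorem 1.10 of the paper: for a
Carnot group of step `s ≥ 3`, rank `k` and dimension `n`, with `d i = dim 𝒟ⁱ`
strictly increasing (dimensions of the flag of the distribution) and
`κ i = dim ℱⁱ` (dimensions of the flag of a generic geodesic), the geodesic
dimension `𝒩 = Σ (2i−1)(κ i − κ (i−1))` is strictly larger than Rifford's
bound `N_R = Q + n − k`, where `Q = Σ i (d i − d (i−1))` is the Hausdorff
dimension. -/
theorem geodesic_dim_gt_rifford_bound (n k s m : ℕ)
    (hk1 : 1 ≤ k) (hkn : k < n) (hs : 3 ≤ s) (hm : s ≤ m)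
    (d κ : ℕ → ℕ)
    (hdmono : ∀ i j, i < j → j ≤ s → d i < d j)
    (hd0 : d 0 = 0) (hd1 : d 1 = k) (hds : d s = n)
    (hκmono : ∀ i j, i ≤ j → j ≤ m → κ i ≤ κ j)
    (hκ0 : κ 0 = 0) (hκ1 : κ 1 = k) (hκm : κ m = n)
    (hκd : ∀ i, i ≤ m → κ i ≤ d (min i s)) :
    ∑ i ∈ Icc 1 m, (2 * i - 1) * (κ i - κ (i - 1)) >
      ∑ i ∈ Icc 1 s, i * (d i - d (i - 1)) + (n - k) := by
  have A : ∀ j, j ≤ m → ∑ i ∈ Icc 1 j, (2 * i - 1) * (κ i - κ (i - 1))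
      + 2 * ∑ i ∈ range j, κ i + κ j = 2 * j * κ j := by
    intro j
    induction j with
    | zero => intro _; simp [hκ0]
    | succ j ih =>
      intro hj
      have h1 := ih (by omega)
      obtain ⟨c, hc⟩ := Nat.exists_eq_add_of_le (hκmono j (j+1) (by omega) hj)
      rw [Finset.sum_Icc_succ_top (by omega), Finset.sum_range_succ]
      have e1 : 2 * (j + 1) - 1 = 2 * j + 1 := by omega
      have e2 : κ (j + 1) - κ (j + 1 - 1) = c := by simp [hc]
      rw [e1, e2, hc]
      linarith
  have B : ∀ j, j ≤ s → ∑ i ∈ Icc 1 j, i * (d i - d (i - 1))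
      + ∑ i ∈ range j, d i = j * d j := by
    intro j
    induction j with
    | zero => intro _; simp
    | succ j ih =>
      intro hj
      have h1 := ih (by omega)
      obtain ⟨c, hc⟩ := Nat.exists_eq_add_of_le (hdmono j (j+1) (by omega) hj).le
      rw [Finset.sum_Icc_succ_top (by omega), Finset.sum_range_succ]
      have e2 : d (j + 1) - d (j + 1 - 1) = c := by simp [hc]
      rw [e2, hc]
      linarith
  have C : ∀ t, 3 ≤ t → t ≤ s →
      2 * ∑ i ∈ range t, κ i + 2 * n + 1 ≤ ∑ i ∈ range t, d i + t * n + k := by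
    intro t ht
    induction t, ht using Nat.le_induction with
    | base =>
      intro h
      have h1 := hκd 2 (by omega)
      rw [min_eq_left (by omega)] at h1
      have h2 := hdmono 2 s (by omega) le_rfl
      simp only [Finset.sum_range_succ, Finset.sum_range_zero, hκ0, hκ1, hd0, hd1]
      omega
    | succ t ht ih =>
      intro h
      have h0 := ih (by omega)
      have h1 := hκd t (by omega)
      rw [min_eq_left (by omega)] at h1
      have h2 := hdmono t s (by omega) le_rfl
      rw [Finset.sum_range_succ, Finset.sum_range_succ, Nat.add_mul t 1 n]
      omega
  have D : ∀ t, s ≤ t → t ≤ m →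
      ∑ i ∈ range t, κ i + s * n ≤ ∑ i ∈ range s, κ i + t * n := by
    intro t ht
    induction t, ht using Nat.le_induction with
    | base => intro _; exact le_rfl
    | succ t ht ih =>
      intro h
      have h0 := ih (by omega)
      have h1 := hκmono t m (by omega) le_rfl
      rw [Finset.sum_range_succ, Nat.add_mul t 1 n]
      omega
  have a := A m le_rfl
  have b := B s le_rfl
  have c := C s hs le_rfl
  have e := D m hm le_rfl
  rw [hκm, mul_assoc] at a
  rw [hds] at b
  omega
end

section
/- Let 𝔤 be a finite-dimensional real Lie algebra which is stratified of step s ≥ 3: there are linear subspaces 𝔤₁, …, 𝔤ₛ of 𝔤 forming an internal direct sum decomposition 𝔤 = 𝔤₁ ⊕ … ⊕ 𝔤ₛ, with [𝔤₁, 𝔤ᵢ] = 𝔤_{i+1} for all 1 ≤ i < s, [𝔤₁, 𝔤ₛ] = 0, and 𝔤ₛ ≠ 0. Then there exist a nonzero X ∈ 𝔤₁ and a nonzero linear functional λ : 𝔤 → ℝ such that λ((ad X)^i(Y)) = 0 for every Y ∈ 𝔤₁ and every integer i ≥ 0. -/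
open LieAlgebra

/-- The subspace spanned by the brackets of elements of two subspaces `A`, `B`
of a Lie algebra. -/
def bracketSpan {L : Type*} [LieRing L] [LieAlgebra ℝ L]
    (A B : Submodule ℝ L) : Submodule ℝ L :=
  Submodule.span ℝ {z | ∃ x ∈ A, ∃ y ∈ B, ⁅x, y⁆ = z}

lemma step3_aux {L : Type*} [LieRing L] [LieAlgebra ℝ L]
    (s : ℕ) (g : ℕ → Submodule ℝ L)
    (hinternal : DirectSum.IsInternal (fun i : Fin s => g ((i : ℕ) + 1)))
    (hbracket : ∀ i, 1 ≤ i → i < s → bracketSpan (g 1) (g i) = g (i + 1))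
    (hlast : bracketSpan (g 1) (g s) = ⊥)
    (k : ℕ) (hk : k < s) (X : L) (hX : X ∈ g 1) (W : Submodule ℝ L) (hW : W < g (k + 1))
    (hXW : ∀ Y ∈ g 1, ((ad ℝ L X) ^ k) Y ∈ W) :
    ∃ lam : L →ₗ[ℝ] ℝ, lam ≠ 0 ∧
      ∀ Y ∈ g 1, ∀ i : ℕ, lam (((ad ℝ L X) ^ i) Y) = 0 := by
  have hind := hinternal.submodule_iSupIndep ⟨k, hk⟩
  set P := ⨆ (j : Fin s) (_ : j ≠ ⟨k, hk⟩), g ((j : ℕ) + 1) with hP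
  have hlt : W ⊔ P < ⊤ := by
    rw [lt_top_iff_ne_top]
    intro h
    have h1 : (W ⊔ P) ⊓ g (k + 1) = W ⊔ P ⊓ g (k + 1) := sup_inf_assoc_of_le P hW.le
    have h2 : P ⊓ g (k + 1) = ⊥ := hind.symm.eq_bot
    rw [h, h2, top_inf_eq, sup_bot_eq] at h1
    exact hW.ne h1.symm
  obtain ⟨lam, hlam, hker⟩ := Submodule.exists_le_ker_of_lt_top _ hlt
  refine ⟨lam, hlam, fun Y hY i => ?_⟩
  have hmem : ∀ i, i < s → ((ad ℝ L X) ^ i) Y ∈ g (i + 1) := by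
    intro i
    induction i with
    | zero => intro _; simpa using hY
    | succ n ih =>
      intro hn
      rw [pow_succ', ← hbracket (n + 1) (by omega) hn]
      exact Submodule.subset_span ⟨X, hX, _, ih (by omega), rfl⟩
  have hzero : ∀ j, ((ad ℝ L X) ^ (s + j)) Y = 0 := by
    intro j
    induction j with
    | zero =>
      obtain ⟨n, rfl⟩ : ∃ n, s = n + 1 := ⟨s - 1, by omega⟩
      rw [← Submodule.mem_bot ℝ, ← hlast, add_zero, pow_succ']
      exact Submodule.subset_span ⟨X, hX, _, hmem n (by omega), rfl⟩
    | succ n ih =>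
      rw [← add_assoc, pow_succ', Module.End.mul_apply, ih, map_zero]
  by_cases his : i < s
  · by_cases hik : i = k
    · subst hik
      exact hker (Submodule.mem_sup_left (hXW Y hY))
    · refine hker (Submodule.mem_sup_right ?_)
      have : g (i + 1) ≤ P :=
        le_iSup₂_of_le (f := fun (j : Fin s) (_ : j ≠ ⟨k, hk⟩) => g ((j : ℕ) + 1))
          ⟨i, his⟩ (by simpa [Fin.ext_iff] using hik) le_rfl
      exact this (hmem i his)
  · obtain ⟨j, rfl⟩ := Nat.exists_eq_add_of_le (not_lt.mp his)
    rw [hzero, map_zero]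

/-- Lemma 8.3 of the paper: every stratified real Lie algebra of step `s ≥ 3`
admits a nonzero `X ∈ 𝔤₁` and a nonzero linear functional `λ` annihilating
`(ad X)ⁱ(𝔤₁)` for all `i ≥ 0`.  By the characterization of abnormal geodesics,
the integral curve of the left-invariant field `X` through the identity of the
corresponding Carnot group is a (normal and) abnormal geodesic, so Carnot
groups of step at least 3 are not ideal. -/
theorem step3_abnormal_exists {L : Type*} [LieRing L] [LieAlgebra ℝ L]
    [FiniteDimensional ℝ L]
    (s : ℕ) (hs : 3 ≤ s) (g : ℕ → Submodule ℝ L)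
    (hinternal : DirectSum.IsInternal (fun i : Fin s => g ((i : ℕ) + 1)))
    (hbracket : ∀ i, 1 ≤ i → i < s → bracketSpan (g 1) (g i) = g (i + 1))
    (hlast : bracketSpan (g 1) (g s) = ⊥)
    (hne : g s ≠ ⊥) :
    ∃ X ∈ g 1, X ≠ 0 ∧ ∃ lam : L →ₗ[ℝ] ℝ, lam ≠ 0 ∧
      ∀ Y ∈ g 1, ∀ i : ℕ, lam (((ad ℝ L X) ^ i) Y) = 0 := by
  have hnz : ∀ k, 1 ≤ k → k ≤ s → g k ≠ ⊥ := by
    intro k hk1 hks h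
    apply hne
    induction s, hks using Nat.le_induction with
    | base => exact h
    | succ n hn ih =>
      have key : ∀ m, k ≤ m → m ≤ n + 1 → g m = ⊥ := by
        intro m hm
        induction m, hm using Nat.le_induction with
        | base => intro _; exact h
        | succ m hm ihm =>
          intro hmn
          rw [← hbracket m (by omega) (by omega), ihm (by omega), bracketSpan, Submodule.span_eq_bot]
          rintro z ⟨x, _, y, hy, rfl⟩
          rw [(Submodule.mem_bot ℝ).mp hy, lie_zero]
      exact key _ (by omega) le_rfl
  have hadmem : ∀ i, 1 ≤ i → i < s → ∀ X ∈ g 1, ∀ Y ∈ g i, ⁅X, Y⁆ ∈ g (i + 1) := by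
    intro i h1 h2 X hX Y hY
    rw [← hbracket i h1 h2]
    exact Submodule.subset_span ⟨X, hX, Y, hY, rfl⟩
  by_cases hsurj : ∀ X ∈ g 1, X ≠ 0 → (g 1).map (ad ℝ L X : L →ₗ[ℝ] L) = g 2
  · obtain ⟨X0, hX0, hX0ne⟩ := Submodule.exists_mem_ne_zero_of_ne_bot (hnz 1 le_rfl (by omega))
    have hdim : Module.finrank ℝ (g 2) < Module.finrank ℝ (g 1) := by
      have h := LinearMap.finrank_range_add_finrank_ker
        ((ad ℝ L X0 : L →ₗ[ℝ] L).domRestrict (g 1))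
      rw [LinearMap.range_domRestrict, hsurj X0 hX0 hX0ne] at h
      have hk : 0 < Module.finrank ℝ
          (LinearMap.ker ((ad ℝ L X0 : L →ₗ[ℝ] L).domRestrict (g 1))) := by
        rw [Nat.pos_iff_ne_zero, Ne, Submodule.finrank_eq_zero]
        intro hb
        have : (⟨X0, hX0⟩ : g 1) ∈
            LinearMap.ker ((ad ℝ L X0 : L →ₗ[ℝ] L).domRestrict (g 1)) := by
          simp [LinearMap.mem_ker]
        rw [hb, Submodule.mem_bot] at this
        exact hX0ne (congrArg Subtype.val this)
      omega
    obtain ⟨z, hz, hzne⟩ := Submodule.exists_mem_ne_zero_of_ne_bot (hnz 3 (by omega) hs)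
    obtain ⟨mu, hmu⟩ : ∃ mu : Module.Dual ℝ L, mu z ≠ 0 := by
      by_contra! hcon
      exact hzne ((Module.forall_dual_apply_eq_zero_iff ℝ z).mp hcon)
    let F : g 1 →ₗ[ℝ] Module.Dual ℝ (g 2) :=
      { toFun := fun X => (mu ∘ₗ (ad ℝ L (X : L) : L →ₗ[ℝ] L)).domRestrict (g 2)
        map_add' := by intro a b; ext y; simp
        map_smul' := by intro a b; ext y; simp }
    have hF : LinearMap.ker F ≠ ⊥ := by
      apply LinearMap.ker_ne_bot_of_finrank_lt
      rwa [Subspace.dual_finrank_eq]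
    obtain ⟨⟨X, hX⟩, hXk, hXne⟩ := Submodule.exists_mem_ne_zero_of_ne_bot hF
    refine ⟨X, hX, fun h => hXne (Subtype.ext h), ?_⟩
    refine step3_aux s g hinternal hbracket hlast 2 (by omega) X hX (g 3 ⊓ LinearMap.ker mu)
      (lt_of_le_of_ne inf_le_left ?_) ?_
    · intro h
      have : z ∈ g 3 ⊓ LinearMap.ker mu := by rw [h]; exact hz
      exact hmu this.2
    · intro Y hY
      have h2 := hadmem 1 le_rfl (by omega) X hX Y hY
      have h3 := hadmem 2 (by omega) (by omega) X hX _ h2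
      have h4 : mu ⁅X, ⁅X, Y⁆⁆ = 0 := LinearMap.congr_fun (LinearMap.mem_ker.mp hXk) ⟨_, h2⟩
      rw [pow_two]
      exact ⟨h3, h4⟩
  · push Not at hsurj
    obtain ⟨X, hX, hXne, hW⟩ := hsurj
    refine ⟨X, hX, hXne, ?_⟩
    refine step3_aux s g hinternal hbracket hlast 1 (by omega) X hX _
      (lt_of_le_of_ne ?_ hW) ?_
    · rintro _ ⟨Y, hY, rfl⟩
      exact hadmem 1 le_rfl (by omega) X hX Y hY
    · intro Y hY
      rw [pow_one]
      exact ⟨Y, hY, rfl⟩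
end

section
/- Let K ∈ ℝ and R > 0, and if K > 0 assume additionally that R ≤ π/√K. Then there exists a constant A > 0 such that for every t ∈ [0,1] and every δ ∈ (0, R): s_K(t·δ) ≥ A·t·s_K(δ). -/
/-- The uniform comparison estimate used in the proof of Theorem 1.8 of the
paper: for `K ∈ ℝ` and `R > 0` (with `R ≤ π/√K` when `K > 0`) there is a
constant `A > 0` such that `s_K(t·δ) ≥ A·t·s_K(δ)` for all `t ∈ [0,1]` and
`δ ∈ (0, R)`. -/
theorem sK_uniform_comparison (K R : ℝ) (hR : 0 < R)
    (hKR : 0 < K → R ≤ Real.pi / Real.sqrt K) :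
    ∃ A : ℝ, 0 < A ∧ ∀ t ∈ Set.Icc (0 : ℝ) 1, ∀ δ ∈ Set.Ioo 0 R,
      sK K (t * δ) ≥ A * t * sK K δ := by
  rcases lt_trichotomy K 0 with hK | hK | hK
  · have hk : 0 < Real.sqrt (-K) := Real.sqrt_pos.mpr (by linarith)
    refine ⟨Real.exp (-(Real.sqrt (-K) * R)), Real.exp_pos _, ?_⟩
    rintro t ⟨ht0, ht1⟩ δ ⟨hd0, hdR⟩
    simp only [sK, if_neg (not_lt.mpr hK.le), if_neg hK.ne]
    set k := Real.sqrt (-K)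
    have hx : 0 < k * δ := mul_pos hk hd0
    have h1 : k * (t * δ) ≤ Real.sinh (k * (t * δ)) :=
      Real.self_le_sinh_iff.mpr (by positivity)
    have h2 : Real.sinh (k * δ) ≤ (k * δ) * Real.exp (k * δ) := by
      have ha := Real.add_one_le_exp (-(2 * (k * δ)))
      have hb : Real.exp (-(k * δ)) = Real.exp (k * δ) * Real.exp (-(2 * (k * δ))) := by
        rw [← Real.exp_add]; congr 1; ring
      rw [Real.sinh_eq, hb]
      nlinarith [Real.exp_pos (k * δ)]
    have h3 : Real.exp (-(k * R)) * Real.sinh (k * δ) ≤ k * δ := by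
      have : Real.exp (-(k * R)) * Real.exp (k * δ) ≤ 1 := by
        rw [← Real.exp_add, Real.exp_le_one_iff]
        nlinarith
      calc _ ≤ Real.exp (-(k * R)) * ((k * δ) * Real.exp (k * δ)) := by gcongr
        _ = (k * δ) * (Real.exp (-(k * R)) * Real.exp (k * δ)) := by ring
        _ ≤ (k * δ) * 1 := by gcongr
        _ = _ := mul_one _
    rw [ge_iff_le, ← mul_div_assoc]
    apply div_le_div_of_nonneg_right _ hk.le
    calc _ = t * (Real.exp (-(k * R)) * Real.sinh (k * δ)) := by ring
      _ ≤ t * (k * δ) := by gcongr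
      _ = k * (t * δ) := by ring
      _ ≤ _ := h1
  · refine ⟨1, one_pos, ?_⟩
    intro t _ δ _
    simp [sK, hK]
  · have hk : 0 < Real.sqrt K := Real.sqrt_pos.mpr hK
    refine ⟨1, one_pos, ?_⟩
    rintro t ⟨ht0, ht1⟩ δ ⟨hd0, hdR⟩
    simp only [sK, if_pos hK]
    have hR' := (le_div_iff₀ hk).mp (hKR hK)
    set k := Real.sqrt K
    have hpi : k * δ ≤ Real.pi := by nlinarith
    have h := strictConcaveOn_sin_Icc.concaveOn.2 (x := k * δ) (y := 0)
      ⟨by positivity, hpi⟩ ⟨le_rfl, Real.pi_pos.le⟩ ht0 (sub_nonneg.mpr ht1) (by ring)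
    simp only [smul_eq_mul, Real.sin_zero, mul_zero, add_zero] at h
    rw [ge_iff_le, ← mul_div_assoc, one_mul]
    apply div_le_div_of_nonneg_right _ hk.le
    rwa [show k * (t * δ) = t * (k * δ) by ring]
end

section
/- Fix N > 1 and suppose that for every K < 0 the MCP(K, N) inequality holds at x: for every measurable Ω ⊆ X with 0 < μ(Ω) < ∞ and every t ∈ [0,1], μ(Ω_t) ≥ ∫_Ω t·(sinh(√(−K)·t·dist(x,z)/√(N−1)) / sinh(√(−K)·dist(x,z)/√(N−1)))^{N−1} dμ(z). Then the MCP(0, N) inequality holds at x: for every measurable Ω ⊆ X with 0 < μ(Ω) < ∞ and every t ∈ [0,1], μ(Ω_t) ≥ t^N·μ(Ω). -/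
open MeasureTheory Metric Filter Set

lemma sinh_ratio_tendsto (t : ℝ) :
    Tendsto (fun u : ℝ => Real.sinh (t * u) / Real.sinh u) (nhdsWithin 0 {0}ᶜ) (nhds t) := by
  have h1 : HasDerivAt (fun u : ℝ => Real.sinh (t * u)) t 0 := by
    have := ((hasDerivAt_id (0 : ℝ)).const_mul t).sinh
    simpa using this
  have h2 : HasDerivAt (fun u : ℝ => Real.sinh u) 1 0 := by
    have := (hasDerivAt_id (0 : ℝ)).sinh
    simpa using this
  have h3 := (hasDerivAt_iff_tendsto_slope.1 h1).div (hasDerivAt_iff_tendsto_slope.1 h2) one_ne_zero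
  rw [div_one] at h3
  refine h3.congr' ?_
  filter_upwards [self_mem_nhdsWithin] with u hu
  have hu' : u ≠ 0 := hu
  simp only [Pi.div_apply, slope_def_field, mul_zero, Real.sinh_zero, sub_zero]
  exact div_div_div_cancel_right₀ hu' _ _

/-- Step 3 of the proof of Theorem 1.1 of the paper (the limiting argument
`K → 0⁻`): if the `MCP(K, N)` inequality holds at `x` for every `K < 0`, then
the `MCP(0, N)` inequality `μ(Ω_t) ≥ t^N μ(Ω)` holds at `x`. -/
theorem MCP_neg_limit {X : Type*} [MetricSpace X] [MeasurableSpace X]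
    [BorelSpace X] (μ : Measure X)
    (hball : ∀ (y : X) (r : ℝ), 0 < r → 0 < μ (ball y r) ∧ μ (ball y r) < ⊤)
    (x : X) (C : Set X) (hC : μ C = 0) (Φ : X → ℝ → X)
    (hΦ : ∀ y ∉ C, Φ y 0 = x ∧ Φ y 1 = y ∧
      ∀ s ∈ Icc (0 : ℝ) 1, ∀ t ∈ Icc (0 : ℝ) 1,
        dist (Φ y s) (Φ y t) = |s - t| * dist x y)
    (N : ℝ) (hN : 1 < N)
    (hMCP : ∀ K : ℝ, K < 0 → ∀ Ω : Set X, MeasurableSet Ω →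
      0 < μ Ω → μ Ω < ⊤ →
      ∀ t ∈ Icc (0 : ℝ) 1,
        μ ((fun y => Φ y t) '' (Ω \ C)) ≥
          ∫⁻ z in Ω, ENNReal.ofReal
            (t * (Real.sinh (Real.sqrt (-K) * t * dist x z / Real.sqrt (N - 1)) /
                  Real.sinh (Real.sqrt (-K) * dist x z / Real.sqrt (N - 1)))
              ^ (N - 1)) ∂μ) :
    ∀ Ω : Set X, MeasurableSet Ω → 0 < μ Ω → μ Ω < ⊤ →
      ∀ t ∈ Icc (0 : ℝ) 1,
        μ ((fun y => Φ y t) '' (Ω \ C)) ≥ ENNReal.ofReal (t ^ N) * μ Ω := by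
  intro Ω hΩ hpos hfin t ht
  have hN1 : 0 < N - 1 := by linarith
  rcases ht.1.eq_or_lt with h0 | h0
  · subst h0
    rw [Real.zero_rpow (by linarith)]
    simp
  -- the inequality away from `x`
  have key : ENNReal.ofReal (t ^ N) * μ (Ω \ {x}) ≤
      μ ((fun y => Φ y t) '' ((Ω \ {x}) \ C)) := by
    rcases eq_or_ne (μ (Ω \ {x})) 0 with hz | hz
    · simp [hz]
    have hm : MeasurableSet (Ω \ {x}) := hΩ.diff (measurableSet_singleton x)
    have hf : μ (Ω \ {x}) < ⊤ := (measure_mono diff_subset).trans_lt hfin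
    let e : ℕ → ℝ := fun n => 1 / ((n : ℝ) + 1)
    have he : ∀ n, 0 < e n := fun n => by positivity
    have het : Tendsto e atTop (nhds 0) := tendsto_one_div_add_atTop_nhds_zero_nat
    let F : ℕ → X → ENNReal := fun n z => ENNReal.ofReal
            (t * (Real.sinh (e n * t * dist x z / Real.sqrt (N - 1)) /
                  Real.sinh (e n * dist x z / Real.sqrt (N - 1)))
              ^ (N - 1))
    have hd : Measurable (fun z => dist x z) := (continuous_const.dist continuous_id).measurable
    have hF : ∀ n, Measurable (F n) := by
      intro n
      refine ENNReal.measurable_ofReal.comp (Measurable.const_mul (Measurable.pow_const ?_ _) _)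
      exact (Real.measurable_sinh.comp ((hd.const_mul _).div_const _)).div
        (Real.measurable_sinh.comp ((hd.const_mul _).div_const _))
    have hle : ∀ n, ∫⁻ z in Ω \ {x}, F n z ∂μ ≤
        μ ((fun y => Φ y t) '' ((Ω \ {x}) \ C)) := by
      intro n
      have := hMCP (-(e n) ^ 2) (by have := he n; simp only [Left.neg_neg_iff]; positivity) _ hm
        (pos_iff_ne_zero.2 hz) hf t ht
      rw [neg_neg, Real.sqrt_sq (he n).le] at this
      exact this
    have hlim : ∀ z ∈ Ω \ {x}, Tendsto (fun n => F n z) atTop (nhds (ENNReal.ofReal (t ^ N))) := by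
      intro z hzz
      have hdz : 0 < dist x z := dist_pos.2 (fun h => hzz.2 h.symm)
      have hsq : 0 < Real.sqrt (N - 1) := Real.sqrt_pos.2 hN1
      have hu : Tendsto (fun n => e n * dist x z / Real.sqrt (N - 1)) atTop
          (nhdsWithin 0 {0}ᶜ) := by
        refine tendsto_nhdsWithin_iff.2 ⟨?_, Eventually.of_forall fun n => ?_⟩
        · have := (het.mul_const (dist x z)).div_const (Real.sqrt (N - 1))
          simpa using this
        · have := he n
          have : 0 < e n * dist x z / Real.sqrt (N - 1) := by positivity
          exact this.ne'
      have h1 := (sinh_ratio_tendsto t).comp hu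
      have h2 := (h1.rpow_const (p := N - 1) (Or.inr hN1.le)).const_mul t
      have h3 : t * t ^ (N - 1) = t ^ N := by
        rw [Real.rpow_sub_one h0.ne']; field_simp
      rw [h3] at h2
      refine (ENNReal.tendsto_ofReal h2).congr fun n => ?_
      simp only [F, Function.comp]
      congr 5
      ring
    calc ENNReal.ofReal (t ^ N) * μ (Ω \ {x})
        = ∫⁻ z in Ω \ {x}, ENNReal.ofReal (t ^ N) ∂μ := by rw [setLIntegral_const]
      _ = ∫⁻ z in Ω \ {x}, liminf (fun n => F n z) atTop ∂μ :=
          setLIntegral_congr_fun hm fun z hz => (hlim z hz).liminf_eq.symm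
      _ ≤ liminf (fun n => ∫⁻ z in Ω \ {x}, F n z ∂μ) atTop := lintegral_liminf_le hF
      _ ≤ _ := liminf_le_of_le (by isBoundedDefault) fun b hb => by
          obtain ⟨n, hn⟩ := hb.exists
          exact hn.trans (hle n)
  by_cases hx : x ∈ Ω ∧ x ∉ C
  · have ht1 : t ^ N ≤ 1 := Real.rpow_le_one ht.1 ht.2 (by linarith)
    have hxx : Φ x t = x := by
      obtain ⟨a, b, c⟩ := hΦ x hx.2
      have := c t ht 0 ⟨le_rfl, zero_le_one⟩
      rw [dist_self, mul_zero, a] at this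
      exact dist_eq_zero.1 this
    have hnot : Disjoint ((fun y => Φ y t) '' ((Ω \ {x}) \ C)) {x} := by
      rw [Set.disjoint_singleton_right]
      rintro ⟨y, ⟨⟨hy, hyx⟩, hyC⟩, hyt⟩
      obtain ⟨a, b, c⟩ := hΦ y hyC
      have := c t ht 0 ⟨le_rfl, zero_le_one⟩
      simp only at hyt
      rw [hyt, a, dist_self, sub_zero, abs_of_pos h0] at this
      have hp : 0 < dist x y := dist_pos.2 (fun h => hyx h.symm)
      have := mul_pos h0 hp
      linarith
    have hsub : ((fun y => Φ y t) '' ((Ω \ {x}) \ C)) ∪ {x} ⊆ (fun y => Φ y t) '' (Ω \ C) := by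
      apply Set.union_subset
      · exact Set.image_mono (Set.diff_subset_diff_left Set.diff_subset)
      · rw [Set.singleton_subset_iff]
        exact ⟨x, hx, hxx⟩
    calc ENNReal.ofReal (t ^ N) * μ Ω
        ≤ ENNReal.ofReal (t ^ N) * (μ (Ω \ {x}) + μ {x}) := by
          gcongr
          refine (measure_mono ?_).trans (measure_union_le _ _)
          simp
      _ = ENNReal.ofReal (t ^ N) * μ (Ω \ {x}) + ENNReal.ofReal (t ^ N) * μ {x} := mul_add _ _ _
      _ ≤ μ ((fun y => Φ y t) '' ((Ω \ {x}) \ C)) + 1 * μ {x} := by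
          gcongr
          exact ENNReal.ofReal_le_one.2 ht1
      _ = μ (((fun y => Φ y t) '' ((Ω \ {x}) \ C)) ∪ {x}) := by
          rw [one_mul, measure_union hnot (measurableSet_singleton x)]
      _ ≤ _ := measure_mono hsub
  · have hμ : μ (Ω \ {x}) = μ Ω := by
      by_cases hxΩ : x ∈ Ω
      · have hxC : x ∈ C := by
          by_contra h
          exact hx ⟨hxΩ, h⟩
        exact measure_diff_null (measure_mono_null (Set.singleton_subset_iff.2 hxC) hC)
      · rw [Set.diff_singleton_eq_self hxΩ]
    rw [← hμ]
    exact key.trans (measure_mono (Set.image_mono (Set.diff_subset_diff_left Set.diff_subset)))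
end
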